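/- Suppose 1 < p ≤ 2 and 0 < s ≤ 1, let p' be the conjugate exponent of p, and let g be holomorphic on the unit disc D. Then: (i) if the multiplication operator M_g maps the Besov space B^p into Q_s, then g ∈ Q_{s,log,1/p'} ∩ H^∞; (ii) if g ∈ Q_{s,log,α} ∩ H^∞ for some α > 1/2, then M_g maps B^p into Q_s. -/

import Mathlib

open MeasureTheory Metric Complex Real Filter Set

noncomputable section

/-- `f` is holomorphic on the open unit disc. -/
def HolOn (f : ℂ → ℂ) : Prop := DifferentiableOn ℂ f (Metric.ball (0:ℂ) 1)

/-- The normalized Lebesgue area measure on `ℂ` (so the unit disc has total mass 1). -/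
def dA : Measure ℂ := (ENNReal.ofReal π)⁻¹ • volume

/-- Bounded holomorphic functions on the unit disc. -/
def Hinf : Set (ℂ → ℂ) :=
  {f | HolOn f ∧ ∃ C : ℝ, ∀ z ∈ Metric.ball (0:ℂ) 1, ‖f z‖ ≤ C}

/-- The Bloch space. -/
def Bloch : Set (ℂ → ℂ) :=
  {f | HolOn f ∧ ∃ C : ℝ, ∀ z ∈ Metric.ball (0:ℂ) 1,
      (1 - ‖z‖ ^ 2) * ‖deriv f z‖ ≤ C}

/-- The little Bloch space: `(1-|z|²)|f'(z)| → 0` as `|z| → 1⁻`. -/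
def littleBloch : Set (ℂ → ℂ) :=
  {f | HolOn f ∧ ∀ ε : ℝ, 0 < ε → ∃ r : ℝ, r < 1 ∧ ∀ z ∈ Metric.ball (0:ℂ) 1,
      r < ‖z‖ → (1 - ‖z‖ ^ 2) * ‖deriv f z‖ < ε}

/-- The `α`-logarithmic Bloch space. -/
def BlochLog (α : ℝ) : Set (ℂ → ℂ) :=
  {f | HolOn f ∧ ∃ C : ℝ, ∀ z ∈ Metric.ball (0:ℂ) 1,
      (1 - ‖z‖ ^ 2) * (Real.log (2 / (1 - ‖z‖ ^ 2))) ^ α *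
        ‖deriv f z‖ ≤ C}

/-- The Besov space `B¹`: holomorphic `f` with `∫_D |f''| dA < ∞`. -/
def Besov1 : Set (ℂ → ℂ) :=
  {f | HolOn f ∧ ∫⁻ z in Metric.ball (0:ℂ) 1,
      ENNReal.ofReal (‖deriv (deriv f) z‖) ∂dA < ⊤}

/-- The Besov space `Bᵖ` (`1 < p < ∞`): `∫_D (1-|z|)^(p-2) |f'(z)|^p dA(z) < ∞`. -/
def Besov (p : ℝ) : Set (ℂ → ℂ) :=
  {f | HolOn f ∧ ∫⁻ z in Metric.ball (0:ℂ) 1,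
      ENNReal.ofReal ((1 - ‖z‖) ^ (p - 2) * ‖deriv f z‖ ^ p) ∂dA < ⊤}

open scoped Classical in
/-- The Besov space `Bᵖ` for all `1 ≤ p < ∞` (with the special definition at `p = 1`). -/
def BesovFull (p : ℝ) : Set (ℂ → ℂ) := if p = 1 then Besov1 else Besov p

/-- The Möbius transformation `φ_a(z) = (a-z)/(1 - conj a · z)`. -/
def phi (a z : ℂ) : ℂ := (a - z) / (1 - (starRingEnd ℂ) a * z)

/-- The space `Q_s`. -/
def Qs (s : ℝ) : Set (ℂ → ℂ) :=
  {f | HolOn f ∧ ⨆ a ∈ Metric.ball (0:ℂ) 1, ∫⁻ z in Metric.ball (0:ℂ) 1,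
      ENNReal.ofReal (‖deriv f z‖ ^ 2 *
        (1 - ‖phi a z‖ ^ 2) ^ s) ∂dA < ⊤}

/-- The space `Q_{s,log,α}`. -/
def QsLog (s α : ℝ) : Set (ℂ → ℂ) :=
  {f | HolOn f ∧ ⨆ a ∈ Metric.ball (0:ℂ) 1,
      (ENNReal.ofReal ((Real.log (2 / (1 - ‖a‖))) ^ (2 * α)) *
        ∫⁻ z in Metric.ball (0:ℂ) 1,
          ENNReal.ofReal (‖deriv f z‖ ^ 2 *
            (1 - ‖phi a z‖ ^ 2) ^ s) ∂dA) < ⊤}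

/-- The Volterra operator `T_g(f)(z) = ∫_0^z g'(ξ) f(ξ) dξ` (along the segment from 0 to z). -/
def Tg (g f : ℂ → ℂ) : ℂ → ℂ :=
  fun z => z * ∫ t in (0:ℝ)..1, deriv g ((t : ℂ) * z) * f ((t : ℂ) * z)

/-- The companion operator `I_g(f)(z) = ∫_0^z g(ξ) f'(ξ) dξ` (along the segment from 0 to z). -/
def Ig (g f : ℂ → ℂ) : ℂ → ℂ :=
  fun z => z * ∫ t in (0:ℝ)..1, g ((t : ℂ) * z) * deriv f ((t : ℂ) * z)

/-- The multiplication operator `M_g(f) = g · f`. -/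
def Mg (g f : ℂ → ℂ) : ℂ → ℂ := fun z => g z * f z

/-- `T` maps `X` into `Y`. -/
def MapsInto (T : (ℂ → ℂ) → (ℂ → ℂ)) (X Y : Set (ℂ → ℂ)) : Prop :=
  ∀ f ∈ X, T f ∈ Y

/-- The Hardy space `H^q`. -/
def Hardy (q : ℝ) : Set (ℂ → ℂ) :=
  {f | HolOn f ∧ ∃ C : ℝ, ∀ r : ℝ, 0 < r → r < 1 →
      (1 / (2 * π)) * ∫ t in (0:ℝ)..(2 * π),
        ‖f ((r : ℂ) * Complex.exp ((t : ℂ) * Complex.I))‖ ^ q ≤ C}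

/-- An inner function: bounded holomorphic with radial boundary values of modulus 1 a.e. -/
def IsInner (g : ℂ → ℂ) : Prop :=
  g ∈ Hinf ∧ ∀ᵐ t : ℝ ∂(volume.restrict (Set.Ioc (0:ℝ) (2 * π))),
    Filter.Tendsto (fun r : ℝ => ‖g ((r : ℂ) * Complex.exp ((t : ℂ) * Complex.I))‖)
      (nhdsWithin 1 (Set.Iio 1)) (nhds 1)

/-- `X` has the f-property (division by inner functions). -/
def FProperty (X : Set (ℂ → ℂ)) : Prop :=
  ∀ h ∈ X, ∀ g : ℂ → ℂ, IsInner g →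
    (fun z => h z / g z) ∈ Hardy 1 → (fun z => h z / g z) ∈ X

/-- The space of multipliers `M(X,Y)`. -/
def Mult (X Y : Set (ℂ → ℂ)) : Set (ℂ → ℂ) :=
  {g | HolOn g ∧ ∀ f ∈ X, (fun z => g z * f z) ∈ Y}

end


lemma mem_D {z : ℂ} : z ∈ Metric.ball (0:ℂ) 1 ↔ ‖z‖ < 1 := by simp

lemma one_sub_conj_mul_ne {a z : ℂ} (ha : ‖a‖ < 1) (hz : ‖z‖ < 1) :
    1 - (starRingEnd ℂ) a * z ≠ 0 := by
  intro h
  have h1 : (starRingEnd ℂ) a * z = 1 := (sub_eq_zero.mp h).symm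
  have h2 : ‖(starRingEnd ℂ) a * z‖ = 1 := by rw [h1]; simp
  rw [norm_mul, RCLike.norm_conj] at h2
  nlinarith [norm_nonneg a, norm_nonneg z]

lemma norm_one_sub_sq (a z : ℂ) :
    ‖1 - (starRingEnd ℂ) a * z‖ ^ 2 = ‖a - z‖ ^ 2 + (1 - ‖a‖ ^ 2) * (1 - ‖z‖ ^ 2) := by
  simp only [← Complex.normSq_eq_norm_sq, Complex.normSq_apply]
  simp
  ring

lemma one_sub_phi {a z : ℂ} (ha : ‖a‖ < 1) (hz : ‖z‖ < 1) :
    1 - ‖phi a z‖ ^ 2 = (1 - ‖a‖ ^ 2) * (1 - ‖z‖ ^ 2) / ‖1 - (starRingEnd ℂ) a * z‖ ^ 2 := by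
  have h : ‖1 - (starRingEnd ℂ) a * z‖ ≠ 0 := norm_ne_zero_iff.mpr (one_sub_conj_mul_ne ha hz)
  have := norm_one_sub_sq a z
  unfold phi
  rw [norm_div, div_pow, eq_div_iff (pow_ne_zero 2 h), sub_mul, div_mul_cancel₀ _ (pow_ne_zero 2 h)]
  linarith

lemma one_sub_sq_pos {z : ℂ} (hz : ‖z‖ < 1) : 0 < 1 - ‖z‖ ^ 2 := by
  nlinarith [norm_nonneg z]

lemma one_sub_phi_pos {a z : ℂ} (ha : ‖a‖ < 1) (hz : ‖z‖ < 1) : 0 < 1 - ‖phi a z‖ ^ 2 := by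
  rw [one_sub_phi ha hz]
  have := one_sub_sq_pos ha
  have := one_sub_sq_pos hz
  have := norm_pos_iff.mpr (one_sub_conj_mul_ne ha hz)
  positivity

lemma phi_lt {a z : ℂ} (ha : ‖a‖ < 1) (hz : ‖z‖ < 1) : ‖phi a z‖ < 1 := by
  have := one_sub_phi_pos ha hz
  nlinarith [norm_nonneg (phi a z)]

lemma phi_symm {a z : ℂ} : ‖phi a z‖ = ‖phi z a‖ := by
  unfold phi
  rw [norm_div, norm_div, norm_sub_rev]
  congr 1
  rw [← RCLike.norm_conj]
  congr 1
  simp [mul_comm]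

lemma phi_phi {a z : ℂ} (ha : ‖a‖ < 1) (hz : ‖z‖ < 1) : phi a (phi a z) = z := by
  have h := one_sub_conj_mul_ne ha hz
  have h2 := one_sub_conj_mul_ne ha (phi_lt ha hz)
  have h3 := one_sub_conj_mul_ne ha ha
  unfold phi at *
  generalize (starRingEnd ℂ) a = b at *
  have h4 : (1 - b * ((a - z) / (1 - b * z))) =
    (1 - b * a) / (1 - b * z) := by
    field_simp
    ring
  rw [h4]
  have h5 : a - (a - z) / (1 - b * z) = z * (1 - b * a) / (1 - b * z) := by
    rw [eq_div_iff h, sub_mul, div_mul_cancel₀ _ h]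
    ring
  rw [h5, div_div_div_cancel_right₀ h, mul_div_cancel_right₀ _ h3]

lemma phi_deriv {a z : ℂ} (ha : ‖a‖ < 1) (hz : ‖z‖ < 1) :
    HasDerivAt (phi a) (-(1 - (starRingEnd ℂ) a * a) / (1 - (starRingEnd ℂ) a * z) ^ 2) z := by
  have h := one_sub_conj_mul_ne ha hz
  have h1 : HasDerivAt (fun z : ℂ => a - z) (-1) z := by
    simpa using (hasDerivAt_id z).const_sub a
  have h2 : HasDerivAt (fun z : ℂ => 1 - (starRingEnd ℂ) a * z) (-((starRingEnd ℂ) a)) z := by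
    simpa using ((hasDerivAt_id z).const_mul ((starRingEnd ℂ) a)).const_sub 1
  refine (h1.div h2 h).congr_deriv ?_
  congr 1
  ring

lemma norm_phi_deriv {a z : ℂ} (ha : ‖a‖ < 1) (hz : ‖z‖ < 1) :
    ‖deriv (phi a) z‖ * (1 - ‖z‖ ^ 2) = 1 - ‖phi a z‖ ^ 2 := by
  rw [(phi_deriv ha hz).deriv, one_sub_phi ha hz, norm_div, norm_neg, norm_pow]
  have : ‖1 - (starRingEnd ℂ) a * a‖ = 1 - ‖a‖ ^ 2 := by
    have h2 := norm_one_sub_sq a a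
    simp only [sub_self, norm_zero] at h2
    have := one_sub_sq_pos ha
    have h3 : ‖1 - (starRingEnd ℂ) a * a‖ ^ 2 = (1 - ‖a‖ ^ 2) ^ 2 := by rw [h2]; ring
    exact (pow_left_inj₀ (norm_nonneg _) this.le two_ne_zero).mp h3
  rw [this]
  ring

lemma phi_zero (a : ℂ) : phi a 0 = a := by simp [phi]
lemma phi_self (a : ℂ) : phi a a = 0 := by simp [phi]

lemma phi_image {a : ℂ} (ha : ‖a‖ < 1) : phi a '' ball 0 1 = ball 0 1 := by
  ext w
  constructor
  · rintro ⟨z, hz, rfl⟩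
    exact mem_D.mpr (phi_lt ha (mem_D.mp hz))
  · intro hw
    exact ⟨phi a w, mem_D.mpr (phi_lt ha (mem_D.mp hw)), phi_phi ha (mem_D.mp hw)⟩

lemma phi_inj {a : ℂ} (ha : ‖a‖ < 1) : InjOn (phi a) (ball 0 1) := by
  intro x hx y hy h
  rw [← phi_phi ha (mem_D.mp hx), ← phi_phi ha (mem_D.mp hy), h]

lemma dA_restrict (s : Set ℂ) : dA.restrict s = (ENNReal.ofReal π)⁻¹ • volume.restrict s := by
  unfold dA; rw [Measure.restrict_smul]

/-- conformal change of variables -/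
lemma change_var (ψ : ℂ → ℂ) (hd : ∀ z ∈ ball (0:ℂ) 1, DifferentiableAt ℂ ψ z)
    (hi : InjOn ψ (ball 0 1)) (him : ψ '' ball 0 1 = ball 0 1) (F : ℂ → ENNReal) :
    ∫⁻ z in ball (0:ℂ) 1, F z ∂dA =
      ∫⁻ z in ball (0:ℂ) 1, ENNReal.ofReal (‖deriv ψ z‖ ^ 2) * F (ψ z) ∂dA := by
  rw [dA_restrict, lintegral_smul_measure, lintegral_smul_measure]
  congr 1
  conv_lhs => rw [← him]
  rw [lintegral_image_eq_lintegral_abs_det_fderiv_mul volume measurableSet_ball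
    (f' := fun z => (((1 : ℂ →L[ℂ] ℂ).smulRight (deriv ψ z)).restrictScalars ℝ)) _ hi]
  · refine setLIntegral_congr_fun measurableSet_ball ?_
    intro z hz
    simp only
    congr 2
    have : (ContinuousLinearMap.restrictScalars ℝ
      ((1 : ℂ →L[ℂ] ℂ).smulRight (deriv ψ z))).det = ‖deriv ψ z‖ ^ 2 := by
      rw [ContinuousLinearMap.det]
      erw [LinearMap.det_restrictScalars (R := ℝ) (S := ℂ) (A := ℂ)
        (f := (((1 : ℂ →L[ℂ] ℂ).smulRight (deriv ψ z) : ℂ →L[ℂ] ℂ) : ℂ →ₗ[ℂ] ℂ))]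
      rw [Algebra.norm_complex_apply, Complex.normSq_eq_norm_sq]
      congr 2
      rw [← LinearMap.det_toMatrix (Module.Basis.singleton (Fin 1) ℂ)]
      simp
    rw [this, abs_of_nonneg (by positivity)]
  · intro z hz
    exact ((hd z hz).hasDerivAt.hasFDerivAt.restrictScalars ℝ).hasFDerivWithinAt

lemma change_phi {a : ℂ} (ha : ‖a‖ < 1) (F : ℂ → ENNReal) :
    ∫⁻ z in ball (0:ℂ) 1, F z ∂dA =
      ∫⁻ z in ball (0:ℂ) 1, ENNReal.ofReal (‖deriv (phi a) z‖ ^ 2) * F (phi a z) ∂dA :=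
  change_var _ (fun _ hz => (phi_deriv ha (mem_D.mp hz)).differentiableAt) (phi_inj ha)
    (phi_image ha) F

lemma HolOn.diffAt {f : ℂ → ℂ} (hf : HolOn f) {z : ℂ} (hz : ‖z‖ < 1) : DifferentiableAt ℂ f z :=
  hf.differentiableAt (isOpen_ball.mem_nhds (mem_D.mpr hz))

lemma HolOn.deriv {f : ℂ → ℂ} (hf : HolOn f) : HolOn (deriv f) :=
  DifferentiableOn.deriv hf isOpen_ball

lemma HolOn.comp_phi {f : ℂ → ℂ} (hf : HolOn f) {a : ℂ} (ha : ‖a‖ < 1) :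
    HolOn (fun z => f (phi a z)) := by
  intro z hz
  have hz' := mem_D.mp hz
  exact ((hf.diffAt (phi_lt ha hz')).comp z (phi_deriv ha hz').differentiableAt).differentiableWithinAt

lemma deriv_comp_phi {f : ℂ → ℂ} (hf : HolOn f) {a : ℂ} (ha : ‖a‖ < 1) {z : ℂ} (hz : ‖z‖ < 1) :
    deriv (fun z => f (phi a z)) z = deriv f (phi a z) * deriv (phi a) z := by
  exact ((hf.diffAt (phi_lt ha hz)).hasDerivAt.comp z (phi_deriv ha hz).differentiableAt.hasDerivAt).deriv

/-- conformal invariance, `Q_s` version -/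
lemma inv_Q {f : ℂ → ℂ} (hf : HolOn f) {a : ℂ} (ha : ‖a‖ < 1) (s : ℝ) :
    ∫⁻ z in ball (0:ℂ) 1, ENNReal.ofReal (‖deriv f z‖ ^ 2 * (1 - ‖phi a z‖ ^ 2) ^ s) ∂dA =
    ∫⁻ z in ball (0:ℂ) 1, ENNReal.ofReal (‖deriv (fun z => f (phi a z)) z‖ ^ 2 *
      (1 - ‖z‖ ^ 2) ^ s) ∂dA := by
  rw [change_phi ha]
  refine setLIntegral_congr_fun measurableSet_ball ?_
  intro z hz
  have hz := mem_D.mp hz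
  simp only
  rw [deriv_comp_phi hf ha hz, phi_phi ha hz, ← ENNReal.ofReal_mul (by positivity), norm_mul]
  congr 1; ring

/-- conformal invariance, Besov version -/
lemma inv_B {f : ℂ → ℂ} (hf : HolOn f) {a : ℂ} (ha : ‖a‖ < 1) (p : ℝ) :
    ∫⁻ z in ball (0:ℂ) 1, ENNReal.ofReal (‖deriv f z‖ ^ p * (1 - ‖z‖ ^ 2) ^ (p - 2)) ∂dA =
    ∫⁻ z in ball (0:ℂ) 1, ENNReal.ofReal (‖deriv (fun z => f (phi a z)) z‖ ^ p *
      (1 - ‖z‖ ^ 2) ^ (p - 2)) ∂dA := by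
  rw [change_phi ha]
  refine setLIntegral_congr_fun measurableSet_ball ?_
  intro z hz
  have hz := mem_D.mp hz
  have h1 := one_sub_sq_pos hz
  have h2 := norm_phi_deriv ha hz
  have h3 : 0 < ‖deriv (phi a) z‖ := by
    have := one_sub_phi_pos ha hz
    rw [← h2] at this
    exact pos_of_mul_pos_left this h1.le
  simp only
  rw [deriv_comp_phi hf ha hz, ← h2, ← ENNReal.ofReal_mul (by positivity), norm_mul,
    Real.mul_rpow (norm_nonneg _) (norm_nonneg _), Real.mul_rpow h3.le h1.le,
    Real.rpow_sub h3, Real.rpow_two]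
  congr 1
  field_simp


lemma polar_dA (F : ℂ → ENNReal) :
    ∫⁻ z in ball (0:ℂ) 1, F z ∂dA = (ENNReal.ofReal π)⁻¹ *
      ∫⁻ q in Ioo (0:ℝ) 1 ×ˢ Ioo (-π) π, ENNReal.ofReal q.1 * F (circleMap 0 q.1 q.2) := by
  rw [dA_restrict, lintegral_smul_measure, smul_eq_mul]
  congr 1
  rw [← lintegral_indicator measurableSet_ball, ← Complex.lintegral_comp_polarCoord_symm]
  rw [← lintegral_indicator (polarCoord.open_target.measurableSet),
    ← lintegral_indicator (measurableSet_Ioo.prod measurableSet_Ioo)]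
  congr 1
  ext q
  have key : Complex.polarCoord.symm q = circleMap 0 q.1 q.2 := by
    rw [Complex.polarCoord_symm_apply, circleMap, zero_add, Complex.exp_mul_I]
    simp
  rw [polarCoord_target]
  by_cases h1 : q ∈ Ioo (0:ℝ) 1 ×ˢ Ioo (-π) π
  · have h2 : q ∈ Ioi (0:ℝ) ×ˢ Ioo (-π) π := ⟨h1.1.1, h1.2⟩
    have h3 : circleMap 0 q.1 q.2 ∈ ball (0:ℂ) 1 := by
      simp [abs_of_pos h1.1.1, h1.1.2]
    rw [indicator_of_mem h1, indicator_of_mem h2, key, indicator_of_mem h3, smul_eq_mul]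
  · rw [indicator_of_notMem h1]
    by_cases h2 : q ∈ Ioi (0:ℝ) ×ˢ Ioo (-π) π
    · rw [indicator_of_mem h2, key, indicator_of_notMem, smul_zero]
      intro h3
      apply h1
      have h4 : 0 < q.1 := h2.1
      simp [abs_of_pos h4] at h3
      exact ⟨⟨h4, h3⟩, h2.2⟩
    · rw [indicator_of_notMem h2]

lemma measurable_cm : Measurable (fun q : ℝ × ℝ => circleMap 0 q.1 q.2) := by
  unfold circleMap
  fun_prop

lemma polar_iter (F : ℂ → ENNReal) (hF : Measurable F) :
    ∫⁻ z in ball (0:ℂ) 1, F z ∂dA = (ENNReal.ofReal π)⁻¹ *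
      ∫⁻ ρ in Ioo (0:ℝ) 1, ∫⁻ θ in Ioo (-π) π, ENNReal.ofReal ρ * F (circleMap 0 ρ θ) := by
  rw [polar_dA, Measure.volume_eq_prod, ← Measure.prod_restrict, lintegral_prod]
  have := measurable_cm
  exact (by fun_prop : Measurable _).aemeasurable

lemma polar_iter' (F : ℂ → ENNReal) (hF : Measurable F) :
    ∫⁻ z in ball (0:ℂ) 1, F z ∂dA = (ENNReal.ofReal π)⁻¹ *
      ∫⁻ θ in Ioo (-π) π, ∫⁻ ρ in Ioo (0:ℝ) 1, ENNReal.ofReal ρ * F (circleMap 0 ρ θ) := by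
  rw [polar_dA, Measure.volume_eq_prod, ← Measure.prod_restrict, lintegral_prod_symm]
  have := measurable_cm
  exact (by fun_prop : Measurable _).aemeasurable

lemma cauchy_ineq {h : ℂ → ℂ} (hh : HolOn h) {a : ℂ} (ha : ‖a‖ < 1) {ρ : ℝ} (h0 : 0 < ρ)
    (h1 : ρ < 1) :
    ENNReal.ofReal ‖h (a * (ρ:ℂ) ^ 2)‖ ≤ (ENNReal.ofReal (2 * π))⁻¹ *
      ∫⁻ θ in Ioo (-π) π, ENNReal.ofReal (‖h (circleMap 0 ρ θ)‖ /
        ‖1 - a * (starRingEnd ℂ) (circleMap 0 ρ θ)‖) := by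
  have hd : DiffContOnCl ℂ h (ball 0 ρ) := by
    apply DifferentiableOn.diffContOnCl
    rw [closure_ball _ h0.ne']
    exact hh.mono (closedBall_subset_ball h1)
  have hw : a * (ρ:ℂ) ^ 2 ∈ ball (0:ℂ) ρ := by
    simp [abs_of_pos h0]
    nlinarith [norm_nonneg a]
  have hC := hd.two_pi_i_inv_smul_circleIntegral_sub_inv_smul hw
  rw [← hC, circleIntegral]
  have hper : Function.Periodic (fun θ : ℝ => deriv (circleMap 0 ρ) θ •
      (circleMap 0 ρ θ - a * (ρ:ℂ) ^ 2)⁻¹ • h (circleMap 0 ρ θ)) (2 * π) := by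
    intro θ
    simp only [deriv_circleMap, periodic_circleMap 0 ρ θ]
  have h2 := hper.intervalIntegral_add_eq 0 (-π)
  rw [zero_add, show -π + 2 * π = π by ring] at h2
  rw [h2, norm_smul, ENNReal.ofReal_mul (norm_nonneg _)]
  have h3 : ENNReal.ofReal ‖(2 * (π:ℂ) * I)⁻¹‖ = (ENNReal.ofReal (2 * π))⁻¹ := by
    rw [norm_inv, ENNReal.ofReal_inv_of_pos (by simp [pi_ne_zero])]
    simp [abs_of_pos pi_pos]
  rw [h3]
  gcongr
  rw [intervalIntegral.integral_of_le (by linarith [pi_pos]), ofReal_norm,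
    integral_Ioc_eq_integral_Ioo]
  refine (enorm_integral_le_lintegral_enorm _).trans (le_of_eq ?_)
  congr 1
  ext θ
  rw [← ofReal_norm]
  congr 1
  set u := circleMap 0 ρ θ with hu
  have hnu : ‖u‖ = ρ := by simp [hu, abs_of_pos h0]
  have h4 : u - a * (ρ:ℂ) ^ 2 = u * (1 - a * (starRingEnd ℂ) u) := by
    have : (ρ:ℂ) ^ 2 = u * (starRingEnd ℂ) u := by
      rw [Complex.mul_conj, Complex.normSq_eq_norm_sq, hnu]; push_cast; rfl
    rw [this]; ring
  rw [h4, norm_smul, norm_smul, norm_inv, norm_mul, hnu, deriv_circleMap, norm_mul, ← hu, hnu]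
  simp
  field_simp

lemma jensen_ennreal {α : Type*} [MeasurableSpace α] (ν : Measure α) [IsProbabilityMeasure ν]
    {q : ℝ} (hq : 1 < q) (f : α → ENNReal) (hf : AEMeasurable f ν) :
    (∫⁻ x, f x ∂ν) ^ q ≤ ∫⁻ x, f x ^ q ∂ν := by
  have hc := Real.HolderConjugate.conjExponent hq
  have := ENNReal.lintegral_mul_le_Lp_mul_Lq ν hc hf (aemeasurable_const (b := 1))
  simp at this
  calc _ ≤ ((∫⁻ x, f x ^ q ∂ν) ^ q⁻¹) ^ q := by gcongr
    _ = _ := by rw [← ENNReal.rpow_mul, inv_mul_cancel₀ (by linarith), ENNReal.rpow_one]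

lemma HolOn.measurable_deriv' {f : ℂ → ℂ} : Measurable (_root_.deriv f) := measurable_deriv f

/-- mean value inequality on circles -/
lemma mv_circle {h : ℂ → ℂ} (hh : HolOn h) (hm : Measurable h) {q : ℝ} (hq : 1 < q) {ρ : ℝ}
    (h0 : 0 < ρ) (h1 : ρ < 1) :
    ENNReal.ofReal (‖h 0‖ ^ q) ≤ (ENNReal.ofReal (2 * π))⁻¹ *
      ∫⁻ θ in Ioo (-π) π, ENNReal.ofReal (‖h (circleMap 0 ρ θ)‖ ^ q) := by
  have hc := cauchy_ineq hh (a := 0) (by simp) h0 h1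
  simp only [zero_mul, sub_zero, norm_one, div_one] at hc
  set ν : Measure ℝ := (ENNReal.ofReal (2 * π))⁻¹ • volume.restrict (Ioo (-π) π) with hν
  have hne : ENNReal.ofReal (2 * π) ≠ 0 := by simp [pi_pos]
  have : IsProbabilityMeasure ν := by
    constructor
    rw [hν]
    simp only [Measure.smul_apply, Measure.restrict_apply_univ, Real.volume_Ioo, smul_eq_mul]
    rw [show π - -π = 2 * π by ring]
    exact ENNReal.inv_mul_cancel hne ENNReal.ofReal_ne_top
  have hcm : Measurable (fun θ : ℝ => circleMap 0 ρ θ) := (continuous_circleMap 0 ρ).measurable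
  have hj := jensen_ennreal ν hq (fun θ => ENNReal.ofReal ‖h (circleMap 0 ρ θ)‖)
    (by fun_prop)
  rw [hν, lintegral_smul_measure, lintegral_smul_measure, smul_eq_mul, smul_eq_mul] at hj
  have hq0 : 0 ≤ q := by linarith
  calc ENNReal.ofReal (‖h 0‖ ^ q) = (ENNReal.ofReal ‖h 0‖) ^ q :=
        (ENNReal.ofReal_rpow_of_nonneg (norm_nonneg _) hq0).symm
    _ ≤ _ := by
      refine (ENNReal.rpow_le_rpow hc hq0).trans (hj.trans (le_of_eq ?_))
      congr 2
      ext θ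
      exact ENNReal.ofReal_rpow_of_nonneg (norm_nonneg _) hq0

/-- total weight -/
noncomputable def Wt (τ : ℝ) : ENNReal := ∫⁻ z in ball (0:ℂ) 1, ENNReal.ofReal ((1 - ‖z‖ ^ 2) ^ τ) ∂dA

lemma Wt_pos (τ : ℝ) : Wt τ ≠ 0 := by
  unfold Wt
  intro h
  rw [lintegral_eq_zero_iff (by fun_prop)] at h
  have h2 : ∀ᵐ z ∂(dA.restrict (ball 0 1)), False := by
    filter_upwards [h, ae_restrict_mem measurableSet_ball] with z hz hz1
    simp only [Pi.zero_apply, ENNReal.ofReal_eq_zero] at hz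
    have := Real.rpow_pos_of_pos (one_sub_sq_pos (mem_D.mp hz1)) τ
    linarith
  have h3 : dA.restrict (ball (0:ℂ) 1) = 0 := by
    simpa using h2
  rw [dA_restrict] at h3
  have h4 := congrArg (fun μ : Measure ℂ => μ (ball 0 1)) h3
  simp at h4
  exact NNReal.pi_pos.ne' h4

/-- area mean value inequality -/
lemma mv_area {h : ℂ → ℂ} (hh : HolOn h) (hm : Measurable h) {q : ℝ} (hq : 1 < q) (τ : ℝ) :
    ENNReal.ofReal (‖h 0‖ ^ q) * Wt τ ≤
      ∫⁻ z in ball (0:ℂ) 1, ENNReal.ofReal (‖h z‖ ^ q * (1 - ‖z‖ ^ 2) ^ τ) ∂dA := by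
  unfold Wt
  rw [polar_iter _ (by fun_prop), polar_iter _ (by fun_prop), mul_left_comm]
  gcongr
  rw [← lintegral_const_mul' _ _ ENNReal.ofReal_ne_top]
  refine setLIntegral_mono' measurableSet_Ioo ?_
  intro ρ hρ
  have hmv := mv_circle hh hm hq hρ.1 hρ.2
  have hn : ∀ θ, ‖circleMap 0 ρ θ‖ = ρ := by intro θ; simp [abs_of_pos hρ.1]
  simp only [hn]
  have hne : ENNReal.ofReal (2 * π) ≠ 0 := by simp [pi_pos]
  have h2 : ENNReal.ofReal (2 * π) * ENNReal.ofReal (‖h 0‖ ^ q) ≤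
    ∫⁻ θ in Ioo (-π) π, ENNReal.ofReal (‖h (circleMap 0 ρ θ)‖ ^ q) := by
    refine (mul_le_mul_right hmv _).trans ?_
    rw [← mul_assoc, ENNReal.mul_inv_cancel hne ENNReal.ofReal_ne_top, one_mul]
  have hc : ∀ x, ENNReal.ofReal ρ * ENNReal.ofReal (‖h (circleMap 0 ρ x)‖ ^ q * (1 - ρ ^ 2) ^ τ) =
    (ENNReal.ofReal ρ * ENNReal.ofReal ((1 - ρ ^ 2) ^ τ)) * ENNReal.ofReal (‖h (circleMap 0 ρ x)‖ ^ q) := by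
    intro x
    rw [ENNReal.ofReal_mul (by positivity)]
    ring
  simp only [hc]
  rw [lintegral_const_mul' _ _ ENNReal.ofReal_ne_top, lintegral_const, Measure.restrict_apply_univ, Real.volume_Ioo,
    show π - -π = 2 * π by ring]
  calc _ = (ENNReal.ofReal ρ * ENNReal.ofReal ((1 - ρ ^ 2) ^ τ)) *
      (ENNReal.ofReal (2 * π) * ENNReal.ofReal (‖h 0‖ ^ q)) := by ring
    _ ≤ _ := mul_le_mul_right h2 _
    _ = _ := (lintegral_const_mul' _ _ (by finiteness)).symm

/-- Bloch-type estimate from the `Q_s` integral -/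
lemma bloch_Q {f : ℂ → ℂ} (hf : HolOn f) {a : ℂ} (ha : ‖a‖ < 1) (s : ℝ) :
    ENNReal.ofReal ((1 - ‖a‖ ^ 2) ^ 2 * ‖deriv f a‖ ^ 2) * Wt s ≤
      ∫⁻ z in ball (0:ℂ) 1, ENNReal.ofReal (‖deriv f z‖ ^ 2 * (1 - ‖phi a z‖ ^ 2) ^ s) ∂dA := by
  rw [inv_Q hf ha]
  have := mv_area (hf.comp_phi ha).deriv (measurable_deriv _) (q := 2) (by norm_num) s
  simp only [Real.rpow_two] at this
  refine le_trans (le_of_eq ?_) this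
  congr 2
  have h2 := norm_phi_deriv ha (z := 0) (by simp)
  simp only [phi_zero, norm_zero] at h2
  rw [deriv_comp_phi hf ha (by simp), norm_mul, phi_zero, ← h2]
  ring

lemma bloch_B {f : ℂ → ℂ} (hf : HolOn f) {a : ℂ} (ha : ‖a‖ < 1) {p : ℝ} (hp : 1 < p) :
    ENNReal.ofReal (((1 - ‖a‖ ^ 2) * ‖deriv f a‖) ^ p) * Wt (p - 2) ≤
      ∫⁻ z in ball (0:ℂ) 1, ENNReal.ofReal (‖deriv f z‖ ^ p * (1 - ‖z‖ ^ 2) ^ (p - 2)) ∂dA := by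
  rw [inv_B hf ha]
  have := mv_area (hf.comp_phi ha).deriv (measurable_deriv _) hp (p - 2)
  refine le_trans (le_of_eq ?_) this
  congr 3
  have h2 := norm_phi_deriv ha (z := 0) (by simp)
  simp only [phi_zero, norm_zero] at h2
  rw [deriv_comp_phi hf ha (by simp), norm_mul, phi_zero, ← h2]
  ring


lemma besov_dir {p : ℝ} (hp1 : 1 < p) (hp2 : p ≤ 2) (K : ENNReal) (hK : K ≠ ⊤) :
    ∃ K' : ENNReal, K' ≠ ⊤ ∧ ∀ f : ℂ → ℂ, HolOn f →
      ∫⁻ z in ball (0:ℂ) 1, ENNReal.ofReal (‖deriv f z‖ ^ p * (1 - ‖z‖ ^ 2) ^ (p - 2)) ∂dA ≤ K →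
      ∫⁻ z in ball (0:ℂ) 1, ENNReal.ofReal (‖deriv f z‖ ^ 2) ∂dA ≤ K' := by
  have hW := Wt_pos (p - 2)
  have hKW : K / Wt (p - 2) ≠ ⊤ := ENNReal.div_ne_top hK hW
  set m : ℝ := (K / Wt (p - 2)).toReal ^ (1 / p) with hm
  have hm0 : 0 ≤ m := by positivity
  refine ⟨ENNReal.ofReal (m ^ (2 - p)) * K, by finiteness, ?_⟩
  intro f hf hB
  refine le_trans ?_ (mul_le_mul_right hB _)
  rw [← lintegral_const_mul' _ _ ENNReal.ofReal_ne_top]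
  refine setLIntegral_mono' measurableSet_ball ?_
  intro z hz
  have hz := mem_D.mp hz
  have h1 := one_sub_sq_pos hz
  rw [← ENNReal.ofReal_mul (by positivity)]
  apply ENNReal.ofReal_le_ofReal
  have hb := (bloch_B hf hz hp1).trans hB
  rw [← ENNReal.le_div_iff_mul_le (Or.inl hW) (Or.inr hK)] at hb
  have hb2 := ENNReal.toReal_mono hKW hb
  rw [ENNReal.toReal_ofReal (by positivity)] at hb2
  have hb3 : (1 - ‖z‖ ^ 2) * ‖deriv f z‖ ≤ m := by
    rw [hm, one_div]
    exact (Real.le_rpow_inv_iff_of_pos (by positivity) (by positivity) (by linarith)).mpr hb2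
  have hx : 0 ≤ ‖deriv f z‖ := norm_nonneg _
  rcases hx.eq_or_lt with h0 | h0
  · rw [← h0]; simp; positivity
  have e1 : ‖deriv f z‖ ^ 2 = ‖deriv f z‖ ^ p * ‖deriv f z‖ ^ (2 - p) := by
    rw [← Real.rpow_add h0, ← Real.rpow_two]; congr 1; ring
  have e2 : ‖deriv f z‖ ≤ m / (1 - ‖z‖ ^ 2) := by
    rw [le_div_iff₀ h1]; linarith
  have e3 : ‖deriv f z‖ ^ (2 - p) ≤ m ^ (2 - p) * (1 - ‖z‖ ^ 2) ^ (p - 2) := by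
    refine (Real.rpow_le_rpow hx e2 (by linarith)).trans (le_of_eq ?_)
    rw [Real.div_rpow hm0 h1.le, div_eq_mul_inv, ← Real.rpow_neg h1.le, neg_sub]
  rw [e1]
  calc _ ≤ ‖deriv f z‖ ^ p * (m ^ (2 - p) * (1 - ‖z‖ ^ 2) ^ (p - 2)) := by gcongr
    _ = _ := by ring

lemma ray_bound {F : ℂ → ℂ} (hF : HolOn F) {κ s : ℝ} (hκ : 0 ≤ κ) (hs : 0 < s)
    (hb : ∀ v : ℂ, ‖v‖ < 1 → ‖deriv F v‖ ≤ κ * (1 - ‖v‖) ^ (-1 - s / 2)) {w : ℂ} (hw : ‖w‖ < 1) :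
    ‖F w - F 0‖ ≤ κ * (2 / s) * (1 - ‖w‖) ^ (-s / 2) := by
  have hlt : ∀ t ∈ Icc (0:ℝ) 1, t * ‖w‖ < 1 := by
    intro t ht; nlinarith [norm_nonneg w, ht.1, ht.2]
  have hn : ∀ t ∈ Icc (0:ℝ) 1, ‖(t:ℂ) * w‖ = t * ‖w‖ := by
    intro t ht; simp [abs_of_nonneg ht.1]
  have hd : ∀ t ∈ Icc (0:ℝ) 1, HasDerivAt (fun t : ℝ => F ((t:ℂ) * w) - F 0)
      (w * deriv F ((t:ℂ) * w)) t := by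
    intro t ht
    have h1 : HasDerivAt (fun t : ℂ => t * w) w (t:ℂ) := by
      simpa using (hasDerivAt_id (t:ℂ)).mul_const w
    have h2 := (hF.diffAt (z := (t:ℂ) * w) (by rw [hn t ht]; exact hlt t ht)).hasDerivAt
    have h3 := ((h2.comp (t:ℂ) h1).comp_ofReal).sub_const (F 0)
    rw [mul_comm] at h3
    exact h3
  have hBd : ∀ t ∈ Icc (0:ℝ) 1, HasDerivAt (fun t : ℝ => κ * (2 / s) * (1 - t * ‖w‖) ^ (-s / 2))
      (κ * ‖w‖ * (1 - t * ‖w‖) ^ (-1 - s / 2)) t := by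
    intro t ht
    have h1 : HasDerivAt (fun t : ℝ => 1 - t * ‖w‖) (-‖w‖) t := by
      simpa using ((hasDerivAt_id t).mul_const ‖w‖).const_sub 1
    have h2 := (h1.rpow_const (p := -s / 2) (Or.inl (by linarith [hlt t ht]))).const_mul (κ * (2 / s))
    refine h2.congr_deriv ?_
    rw [show -s / 2 - 1 = -1 - s / 2 by ring]
    field_simp
  have := image_norm_le_of_norm_deriv_right_le_deriv_boundary'
    (f := fun t : ℝ => F ((t:ℂ) * w) - F 0) (f' := fun t => w * deriv F ((t:ℂ) * w))
    (a := 0) (b := 1) (B := fun t : ℝ => κ * (2 / s) * (1 - t * ‖w‖) ^ (-s / 2))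
    (B' := fun t => κ * ‖w‖ * (1 - t * ‖w‖) ^ (-1 - s / 2))
    (fun t ht => (hd t ht).continuousAt.continuousWithinAt)
    (fun t ht => (hd t ⟨ht.1, ht.2.le⟩).hasDerivWithinAt)
    (by simp; positivity)
    (fun t ht => (hBd t ht).continuousAt.continuousWithinAt)
    (fun t ht => (hBd t ⟨ht.1, ht.2.le⟩).hasDerivWithinAt)
    (fun t ht => by
      have ht' : t ∈ Icc (0:ℝ) 1 := ⟨ht.1, ht.2.le⟩
      have := hb ((t:ℂ) * w) (by rw [hn t ht']; exact hlt t ht')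
      rw [hn t ht'] at this
      rw [norm_mul]
      calc _ ≤ ‖w‖ * (κ * (1 - t * ‖w‖) ^ (-1 - s / 2)) := by gcongr
        _ = _ := by ring)
    (x := 1) (by simp)
  simpa using this

lemma growth_Ds {s : ℝ} (hs : 0 < s) {F : ℂ → ℂ} (hF : HolOn F)
    (hN : ∫⁻ z in ball (0:ℂ) 1, ENNReal.ofReal (‖deriv F z‖ ^ 2 * (1 - ‖z‖ ^ 2) ^ s) ∂dA ≠ ⊤)
    {w : ℂ} (hw : ‖w‖ < 1) :
    ENNReal.ofReal (‖F w - F 0‖ ^ 2 * (1 - ‖w‖ ^ 2) ^ s) ≤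
      (ENNReal.ofReal (4 ^ s * 4 / s ^ 2) / Wt s) *
      ∫⁻ z in ball (0:ℂ) 1, ENNReal.ofReal (‖deriv F z‖ ^ 2 * (1 - ‖z‖ ^ 2) ^ s) ∂dA := by
  set N := ∫⁻ z in ball (0:ℂ) 1, ENNReal.ofReal (‖deriv F z‖ ^ 2 * (1 - ‖z‖ ^ 2) ^ s) ∂dA with hNd
  have hW := Wt_pos s
  have hNW : N / Wt s ≠ ⊤ := ENNReal.div_ne_top hN hW
  set k := (N / Wt s).toReal with hk
  have hk0 : 0 ≤ k := ENNReal.toReal_nonneg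
  have hpt : ∀ v : ℂ, ‖v‖ < 1 → ‖deriv F v‖ ≤ √(2 ^ s * k) * (1 - ‖v‖) ^ (-1 - s / 2) := by
    intro v hv
    have hv1 : 0 < 1 - ‖v‖ := by linarith
    have h1 : ∫⁻ z in ball (0:ℂ) 1, ENNReal.ofReal (‖deriv F z‖ ^ 2 * (1 - ‖phi v z‖ ^ 2) ^ s) ∂dA
        ≤ ENNReal.ofReal ((2 / (1 - ‖v‖)) ^ s) * N := by
      rw [hNd, ← lintegral_const_mul' _ _ ENNReal.ofReal_ne_top]
      refine setLIntegral_mono' measurableSet_ball ?_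
      intro z hz
      have hz := mem_D.mp hz
      have hz1 := one_sub_sq_pos hz
      rw [← ENNReal.ofReal_mul (by positivity)]
      apply ENNReal.ofReal_le_ofReal
      have h2 : 1 - ‖phi v z‖ ^ 2 ≤ 2 / (1 - ‖v‖) * (1 - ‖z‖ ^ 2) := by
        rw [one_sub_phi hv hz]
        have h3 : 1 - ‖v‖ ≤ ‖1 - (starRingEnd ℂ) v * z‖ := by
          have := norm_sub_norm_le 1 ((starRingEnd ℂ) v * z)
          rw [norm_mul, RCLike.norm_conj, norm_one] at this
          nlinarith [norm_nonneg v, norm_nonneg z]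
        have h4 : 0 < ‖1 - (starRingEnd ℂ) v * z‖ := by linarith
        rw [div_le_iff₀ (by positivity), div_mul_eq_mul_div, div_mul_eq_mul_div, le_div_iff₀ hv1]
        have h5 : (1 - ‖v‖) ^ 2 ≤ ‖1 - (starRingEnd ℂ) v * z‖ ^ 2 := by gcongr
        have h6 : (1 - ‖v‖ ^ 2) * (1 - ‖v‖) ≤ 2 * (1 - ‖v‖) ^ 2 := by
          nlinarith [norm_nonneg v, sq_nonneg (1 - ‖v‖)]
        nlinarith
      calc _ ≤ ‖deriv F z‖ ^ 2 * (2 / (1 - ‖v‖) * (1 - ‖z‖ ^ 2)) ^ s := by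
            have := (one_sub_phi_pos hv hz).le
            gcongr
        _ = _ := by rw [Real.mul_rpow (by positivity) hz1.le]; ring
    have h2 := (bloch_Q hF hv s).trans h1
    rw [← ENNReal.le_div_iff_mul_le (Or.inl hW) (Or.inr (by finiteness)), mul_div_assoc] at h2
    have h3 := ENNReal.toReal_mono (by finiteness) h2
    rw [ENNReal.toReal_mul, ENNReal.toReal_ofReal (by positivity), ENNReal.toReal_ofReal (by positivity), ← hk] at h3
    refine (sq_le_sq₀ (norm_nonneg _) (by positivity)).mp ?_
    rw [mul_pow, Real.sq_sqrt (by positivity), ← Real.rpow_natCast ((1 - ‖v‖) ^ _), ← Real.rpow_mul hv1.le]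
    have h4 : (1 - ‖v‖) ^ ((-1 - s / 2) * ((2:ℕ):ℝ)) = ((1 - ‖v‖) ^ s)⁻¹ * ((1 - ‖v‖) ^ 2)⁻¹ := by
      rw [← Real.rpow_neg hv1.le, ← Real.rpow_two, ← Real.rpow_neg hv1.le, ← Real.rpow_add hv1]
      congr 1; push_cast; ring
    rw [h4]
    rw [Real.div_rpow (by norm_num) hv1.le] at h3
    have h5 : (1 - ‖v‖) ^ 2 * ‖deriv F v‖ ^ 2 ≤ 2 ^ s / (1 - ‖v‖) ^ s * k := by
      refine le_trans ?_ h3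
      gcongr
      nlinarith [norm_nonneg v]
    have h6 : 0 < (1 - ‖v‖) ^ s := by positivity
    calc ‖deriv F v‖ ^ 2 = ((1 - ‖v‖) ^ 2 * ‖deriv F v‖ ^ 2) * ((1 - ‖v‖) ^ 2)⁻¹ := by field_simp
      _ ≤ (2 ^ s / (1 - ‖v‖) ^ s * k) * ((1 - ‖v‖) ^ 2)⁻¹ := by gcongr
      _ = _ := by ring
  have hr := ray_bound hF (by positivity) hs hpt hw
  have hw1 : 0 < 1 - ‖w‖ := by linarith
  have hfin : ‖F w - F 0‖ ^ 2 * (1 - ‖w‖ ^ 2) ^ s ≤ (4 ^ s * 4 / s ^ 2) * k := by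
    have h1 : (1 - ‖w‖ ^ 2) ^ s ≤ 2 ^ s * (1 - ‖w‖) ^ s := by
      rw [← Real.mul_rpow (by norm_num) hw1.le]
      have := (one_sub_sq_pos hw).le
      apply Real.rpow_le_rpow this _ hs.le
      nlinarith [norm_nonneg w]
    have h2 : ‖F w - F 0‖ ^ 2 ≤ (2 ^ s * k) * (4 / s ^ 2) * ((1 - ‖w‖) ^ s)⁻¹ := by
      calc _ ≤ (√(2 ^ s * k) * (2 / s) * (1 - ‖w‖) ^ (-s / 2)) ^ 2 := by gcongr
        _ = _ := by
          rw [mul_pow, mul_pow, Real.sq_sqrt (by positivity), ← Real.rpow_natCast ((1 - ‖w‖) ^ _),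
            ← Real.rpow_mul hw1.le, ← Real.rpow_neg hw1.le]
          rw [show -s / 2 * ((2:ℕ):ℝ) = -s by push_cast; ring]
          ring
    have h6 : 0 < (1 - ‖w‖) ^ s := by positivity
    have h7 : (4:ℝ) ^ s = 2 ^ s * 2 ^ s := by
      rw [← Real.mul_rpow (by norm_num) (by norm_num)]; norm_num
    have h8 := (one_sub_sq_pos hw).le
    calc _ ≤ ((2 ^ s * k) * (4 / s ^ 2) * ((1 - ‖w‖) ^ s)⁻¹) * (2 ^ s * (1 - ‖w‖) ^ s) := by gcongr
      _ = _ := by rw [h7]; field_simp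
  refine (ENNReal.ofReal_le_ofReal hfin).trans (le_of_eq ?_)
  rw [ENNReal.ofReal_mul (by positivity), hk, ENNReal.ofReal_toReal hNW]
  simp only [div_eq_mul_inv]
  ring

lemma Q_le_dir {f : ℂ → ℂ} {a : ℂ} (ha : ‖a‖ < 1) {s : ℝ} (hs : 0 < s) :
    ∫⁻ z in ball (0:ℂ) 1, ENNReal.ofReal (‖deriv f z‖ ^ 2 * (1 - ‖phi a z‖ ^ 2) ^ s) ∂dA ≤
    ∫⁻ z in ball (0:ℂ) 1, ENNReal.ofReal (‖deriv f z‖ ^ 2) ∂dA := by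
  refine setLIntegral_mono' measurableSet_ball ?_
  intro z hz
  apply ENNReal.ofReal_le_ofReal
  have h1 := one_sub_phi_pos ha (mem_D.mp hz)
  have : (1 - ‖phi a z‖ ^ 2) ^ s ≤ 1 :=
    Real.rpow_le_one h1.le (by nlinarith [sq_nonneg ‖phi a z‖]) hs.le
  nlinarith [sq_nonneg ‖deriv f z‖]

lemma growth_L {s : ℝ} (hs : 0 < s) {f : ℂ → ℂ} (hf : HolOn f)
    (hN : ∫⁻ z in ball (0:ℂ) 1, ENNReal.ofReal (‖deriv f z‖ ^ 2) ∂dA ≠ ⊤)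
    {a z : ℂ} (ha : ‖a‖ < 1) (hz : ‖z‖ < 1) :
    ENNReal.ofReal (‖f z - f a‖ ^ 2 * (1 - ‖phi a z‖ ^ 2) ^ s) ≤
      (ENNReal.ofReal (4 ^ s * 4 / s ^ 2) / Wt s) *
      ∫⁻ v in ball (0:ℂ) 1, ENNReal.ofReal (‖deriv f v‖ ^ 2 * (1 - ‖phi z v‖ ^ 2) ^ s) ∂dA := by
  have h1 := ne_top_of_le_ne_top hN (Q_le_dir (f := f) hz hs)
  rw [inv_Q hf hz] at h1 ⊢
  have := growth_Ds hs (hf.comp_phi hz) h1 (phi_lt hz ha)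
  simp only [phi_phi hz ha, phi_zero] at this
  rwa [phi_symm, norm_sub_rev]

instance dA_sfinite : SFinite dA := by
  unfold dA
  have : (ENNReal.ofReal π)⁻¹ = ((ENNReal.ofReal π)⁻¹.toNNReal : ENNReal) := by
    rw [ENNReal.coe_toNNReal]
    simp [pi_pos]
  rw [this]
  infer_instance

lemma measurable_phi2 : Measurable (fun q : ℂ × ℂ => phi q.1 q.2) := by
  unfold phi
  have : Measurable (starRingEnd ℂ) := Complex.continuous_conj.measurable
  fun_prop

lemma trick_T {s : ℝ} (hs : 0 < s) {f g : ℂ → ℂ} (hf : HolOn f)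
    (hN : ∫⁻ z in ball (0:ℂ) 1, ENNReal.ofReal (‖deriv f z‖ ^ 2) ∂dA ≠ ⊤)
    {M : ENNReal} (hM : ∀ v : ℂ, ‖v‖ < 1 →
      ∫⁻ z in ball (0:ℂ) 1, ENNReal.ofReal (‖deriv g z‖ ^ 2 * (1 - ‖phi v z‖ ^ 2) ^ s) ∂dA ≤ M)
    {a : ℂ} (ha : ‖a‖ < 1) :
    ∫⁻ z in ball (0:ℂ) 1, ENNReal.ofReal (‖deriv g z‖ ^ 2 * ‖f z - f a‖ ^ 2 *
        (1 - ‖phi a z‖ ^ 2) ^ s) ∂dA ≤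
      (ENNReal.ofReal (4 ^ s * 4 / s ^ 2) / Wt s) * (M *
      ∫⁻ z in ball (0:ℂ) 1, ENNReal.ofReal (‖deriv f z‖ ^ 2) ∂dA) := by
  set C := (ENNReal.ofReal (4 ^ s * 4 / s ^ 2) / Wt s) with hC
  have hCt : C ≠ ⊤ := ENNReal.div_ne_top (by finiteness) (Wt_pos s)
  have hmp := measurable_phi2
  have hdg : Measurable (deriv g) := measurable_deriv g
  have hdf : Measurable (deriv f) := measurable_deriv f
  calc _ ≤ ∫⁻ z in ball (0:ℂ) 1, C * ∫⁻ v in ball (0:ℂ) 1, ENNReal.ofReal (‖deriv g z‖ ^ 2) *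
        ENNReal.ofReal (‖deriv f v‖ ^ 2 * (1 - ‖phi z v‖ ^ 2) ^ s) ∂dA ∂dA := by
        refine setLIntegral_mono' measurableSet_ball ?_
        intro z hz
        have hz := mem_D.mp hz
        rw [lintegral_const_mul' _ _ ENNReal.ofReal_ne_top, mul_assoc,
          ENNReal.ofReal_mul (by positivity), mul_left_comm]
        exact mul_le_mul_right (growth_L hs hf hN ha hz) _
    _ = C * ∫⁻ v in ball (0:ℂ) 1, ∫⁻ z in ball (0:ℂ) 1, ENNReal.ofReal (‖deriv g z‖ ^ 2) *
        ENNReal.ofReal (‖deriv f v‖ ^ 2 * (1 - ‖phi z v‖ ^ 2) ^ s) ∂dA ∂dA := by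
        rw [lintegral_const_mul' _ _ hCt, lintegral_lintegral_swap]
        exact (by fun_prop : Measurable _).aemeasurable
    _ ≤ C * ∫⁻ v in ball (0:ℂ) 1, M * ENNReal.ofReal (‖deriv f v‖ ^ 2) ∂dA := by
        refine mul_le_mul_right ?_ _
        refine setLIntegral_mono' measurableSet_ball ?_
        intro v hv
        refine le_trans (le_of_eq ?_) (mul_le_mul_left (hM v (mem_D.mp hv)) _)
        rw [← lintegral_mul_const' _ _ ENNReal.ofReal_ne_top]
        refine setLIntegral_congr_fun measurableSet_ball ?_
        intro z hz
        simp only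
        have := (one_sub_phi_pos (mem_D.mp hv) (mem_D.mp hz))
        rw [phi_symm, ← ENNReal.ofReal_mul (by positivity), ← ENNReal.ofReal_mul (by positivity)]
        congr 1; ring
    _ = _ := by
        rw [lintegral_const_mul M (by fun_prop)]


lemma kernel_lower {r ρ θ : ℝ} (hr0 : 0 ≤ r) (hr1 : r < 1) (h0 : 0 < ρ) (h1 : ρ < 1)
    (hθ : |θ| ≤ π) :
    (1 - ρ) + ((1 - r) + |θ|) ≤ 6 * ‖1 - (r:ℂ) * circleMap 0 ρ θ‖ := by
  set x := r * ρ with hx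
  have hx0 : 0 ≤ x := by positivity
  have hxr : x ≤ r := by nlinarith
  have hxρ : x ≤ ρ := by nlinarith
  have hsq : ‖1 - (r:ℂ) * circleMap 0 ρ θ‖ ^ 2 = (1 - x) ^ 2 + 2 * x * (1 - Real.cos θ) := by
    rw [← Complex.normSq_eq_norm_sq, Complex.normSq_apply]
    simp [circleMap, Complex.exp_re, Complex.exp_im]
    have := Real.sin_sq_add_cos_sq θ
    have e : Real.sin θ ^ 2 = 1 - Real.cos θ ^ 2 := by linarith
    ring_nf
    rw [e]
    rw [hx]; ring
  set n := ‖1 - (r:ℂ) * circleMap 0 ρ θ‖ with hn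
  have hn0 : 0 ≤ n := norm_nonneg _
  have hcos := Real.cos_le_one_sub_mul_cos_sq hθ
  have hn1 : 1 - x ≤ n := by
    refine (sq_le_sq₀ (by linarith) hn0).mp ?_
    rw [hsq]
    have := Real.cos_le_one θ
    nlinarith
  have hy0 : 0 ≤ |θ| / π := by positivity
  have hy1 : |θ| / π ≤ 1 := by rw [div_le_one pi_pos]; exact hθ
  have hy : 2 / π ^ 2 * θ ^ 2 = 2 * (|θ| / π) ^ 2 := by
    rw [div_pow, sq_abs]; ring
  rw [hy] at hcos
  have hn2 : |θ| / π ≤ n := by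
    refine (sq_le_sq₀ hy0 hn0).mp ?_
    rw [hsq]
    have h1 : 2 * x * (2 * (|θ| / π) ^ 2) ≤ 2 * x * (1 - Real.cos θ) := by
      apply mul_le_mul_of_nonneg_left _ (by positivity)
      linarith
    have h2 : (|θ| / π) ^ 2 ≤ 1 := by nlinarith
    nlinarith [mul_le_mul_of_nonneg_left h2 (sq_nonneg (1 - x)), mul_nonneg hx0 (sq_nonneg (|θ| / π)),
      mul_nonneg (sq_nonneg x) (sq_nonneg (|θ| / π))]
  rw [div_le_iff₀ pi_pos] at hn2
  have := Real.pi_le_four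
  nlinarith

lemma lint_ftc {G g : ℝ → ℝ} {a b : ℝ} (hab : a ≤ b) (hc : ContinuousOn G (Icc a b))
    (hd : ∀ x ∈ Ioo a b, HasDerivAt G (g x) x) (hg : ∀ x ∈ Ioo a b, 0 ≤ g x) :
    ∫⁻ x in Ioo a b, ENNReal.ofReal (g x) = ENNReal.ofReal (G b - G a) := by
  have hi := intervalIntegral.integrableOn_deriv_of_nonneg hc hd hg
  have h1 := intervalIntegral.integral_eq_sub_of_hasDerivAt_of_le hab hc hd
    ((intervalIntegrable_iff_integrableOn_Ioc_of_le hab).mpr hi)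
  rw [← h1, intervalIntegral.integral_of_le hab, integral_Ioc_eq_integral_Ioo,
    ofReal_integral_eq_lintegral_ofReal (hi.mono_set Ioo_subset_Ioc_self)]
  filter_upwards [ae_restrict_mem measurableSet_Ioo] with x hx using hg x hx

lemma radial_int {p m : ℝ} (hp : 1 < p) (hm : 0 < m) :
    ∫⁻ ρ in Ioo (0:ℝ) 1, ENNReal.ofReal ((1 - ρ) ^ (p - 2) / ((1 - ρ) + m) ^ p) ≤
      ENNReal.ofReal (1 / ((p - 1) * m)) := by
  have hp' : 0 < p - 1 := by linarith
  rw [lint_ftc (G := fun ρ => -(((1 - ρ) / ((1 - ρ) + m)) ^ (p - 1) / ((p - 1) * m))) zero_le_one]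
  · apply ENNReal.ofReal_le_ofReal
    simp only [sub_self, zero_div, zero_add, sub_zero]
    rw [Real.zero_rpow hp'.ne', zero_div, neg_zero, sub_neg_eq_add, zero_add]
    gcongr
    apply Real.rpow_le_one (by positivity) _ hp'.le
    rw [div_le_one (by positivity)]; linarith
  · apply ContinuousOn.neg
    apply ContinuousOn.div_const
    apply ContinuousOn.rpow_const
    · apply ContinuousOn.div (by fun_prop) (by fun_prop)
      intro x hx
      have := hx.2
      linarith
    · intro x hx; right; exact hp'.le
  · intro x hx
    have hx1 : 0 < 1 - x := by linarith [hx.2]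
    have h1 : HasDerivAt (fun ρ : ℝ => 1 - ρ) (-1) x := by
      simpa using (hasDerivAt_id x).const_sub 1
    have h2 := h1.add_const m
    have h3 := h1.div h2 (by linarith : (1 - x) + m ≠ 0)
    have h4 := ((h3.rpow_const (p := p - 1) (Or.inl (by
      have : 0 < (1 - x) / (1 - x + m) := by positivity
      exact this.ne'))).div_const ((p - 1) * m)).neg
    refine h4.congr_deriv ?_
    simp only [Pi.div_apply]
    rw [Real.div_rpow hx1.le (by linarith), show p - 1 - 1 = p - 2 by ring]
    have h5 : (1 - x + m) ^ p = (1 - x + m) ^ (p - 2) * (1 - x + m) ^ 2 := by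
      rw [← Real.rpow_two, ← Real.rpow_add (by linarith)]; congr 1; ring
    rw [h5]
    have h6 : 0 < (1 - x + m) ^ (p - 2) := by positivity
    field_simp
    ring
  · intro x hx
    have hx1 : 0 < 1 - x := by linarith [hx.2]
    positivity

lemma angular_int {δ : ℝ} (hδ : 0 < δ) :
    ∫⁻ θ in Ioo (-π) π, ENNReal.ofReal (1 / (δ + |θ|)) ≤
      ENNReal.ofReal (2 * Real.log ((δ + π) / δ)) := by
  have hπ := pi_pos
  have e : Ioo (-π) π = Ioc (-π) 0 ∪ Ioo 0 π := (Ioc_union_Ioo_eq_Ioo (by linarith) hπ).symm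
  rw [e]
  refine (lintegral_union_le _ _ _).trans ?_
  rw [setLIntegral_congr (Ioo_ae_eq_Ioc (a := -π) (b := 0)).symm]
  have hlog : 0 ≤ Real.log ((δ + π) / δ) := by
    apply Real.log_nonneg
    rw [le_div_iff₀ hδ]; linarith
  rw [two_mul, ENNReal.ofReal_add hlog hlog]
  have hl : Real.log ((δ + π) / δ) = Real.log (δ + π) - Real.log δ :=
    Real.log_div (by positivity) hδ.ne'
  gcongr
  · rw [setLIntegral_congr_fun (g := fun θ => ENNReal.ofReal (1 / (δ - θ))) measurableSet_Ioo,
      lint_ftc (G := fun θ => - Real.log (δ - θ)) (by linarith)]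
    · apply le_of_eq; rw [hl]; congr 1; simp; ring
    · apply ContinuousOn.neg
      apply ContinuousOn.log (by fun_prop)
      intro x hx; linarith [hx.2]
    · intro x hx
      have h1 : HasDerivAt (fun ρ : ℝ => δ - ρ) (-1) x := by
        simpa using (hasDerivAt_id x).const_sub δ
      refine (h1.log (by linarith [hx.2])).neg.congr_deriv ?_
      ring
    · intro x hx
      have : 0 < δ - x := by linarith [hx.2]
      positivity
    · intro x hx
      simp only
      rw [abs_of_neg hx.2]; congr 2
  · rw [setLIntegral_congr_fun (g := fun θ => ENNReal.ofReal (1 / (δ + θ))) measurableSet_Ioo,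
      lint_ftc (G := fun θ => Real.log (δ + θ)) (by linarith)]
    · apply le_of_eq; rw [hl]; congr 1; simp
    · apply ContinuousOn.log (by fun_prop)
      intro x hx; linarith [hx.1]
    · intro x hx
      have h1 : HasDerivAt (fun ρ : ℝ => δ + ρ) 1 x := by
        simpa using (hasDerivAt_id x).const_add δ
      exact (h1.log (by linarith [hx.1]))
    · intro x hx
      have : 0 < δ + x := by linarith [hx.1]
      positivity
    · intro x hx
      simp only
      rw [abs_of_pos hx.1]

lemma kernel_real {p : ℝ} (hp : 1 < p) {r : ℝ} (hr0 : 0 ≤ r) (hr1 : r < 1) :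
    ∫⁻ z in ball (0:ℂ) 1, ENNReal.ofReal ((1 - ‖z‖) ^ (p - 2) / ‖1 - (r:ℂ) * z‖ ^ p) ∂dA ≤
      ENNReal.ofReal (6 ^ p / (p - 1) * (6 * Real.log (2 / (1 - r)))) := by
  have hr : 0 < 1 - r := by linarith
  have hp' : 0 < p - 1 := by linarith
  rw [polar_iter' _ (by fun_prop)]
  have hπ : (ENNReal.ofReal π)⁻¹ ≤ 1 := by
    rw [ENNReal.inv_le_one, ENNReal.one_le_ofReal]
    linarith [Real.pi_gt_three]
  refine (mul_le_mul_left hπ _).trans ?_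
  rw [one_mul]
  calc _ ≤ ∫⁻ θ in Ioo (-π) π, ENNReal.ofReal (6 ^ p / (p - 1)) * ENNReal.ofReal (1 / ((1 - r) + |θ|)) := by
        refine setLIntegral_mono' measurableSet_Ioo ?_
        intro θ hθ
        have hθ' : |θ| ≤ π := abs_le.mpr ⟨hθ.1.le, hθ.2.le⟩
        have hm : 0 < (1 - r) + |θ| := by positivity
        calc _ ≤ ∫⁻ ρ in Ioo (0:ℝ) 1, ENNReal.ofReal (6 ^ p) *
              ENNReal.ofReal ((1 - ρ) ^ (p - 2) / ((1 - ρ) + ((1 - r) + |θ|)) ^ p) := by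
              refine setLIntegral_mono' measurableSet_Ioo ?_
              intro ρ hρ
              have hρ1 : 0 < 1 - ρ := by linarith [hρ.2]
              have hk := kernel_lower hr0 hr1 hρ.1 hρ.2 hθ'
              set n := ‖1 - (r:ℂ) * circleMap 0 ρ θ‖ with hn
              have hn0 : 0 < n := by nlinarith
              have hcn : ‖circleMap 0 ρ θ‖ = ρ := by simp [abs_of_pos hρ.1]
              rw [hcn, ← ENNReal.ofReal_mul hρ.1.le, ← ENNReal.ofReal_mul (by positivity)]
              apply ENNReal.ofReal_le_ofReal
              have h1 : ((1 - ρ) + ((1 - r) + |θ|)) ^ p ≤ 6 ^ p * n ^ p := by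
                rw [← Real.mul_rpow (by norm_num) hn0.le]
                exact Real.rpow_le_rpow (by positivity) hk (by linarith)
              have h2 : 0 < ((1 - ρ) + ((1 - r) + |θ|)) ^ p := by positivity
              have h3 : 0 < n ^ p := by positivity
              have h4 : 0 < (1 - ρ) ^ (p - 2) := by positivity
              calc ρ * ((1 - ρ) ^ (p - 2) / n ^ p) ≤ 1 * ((1 - ρ) ^ (p - 2) / n ^ p) := by
                    gcongr; exact hρ.2.le
                _ ≤ _ := by
                    rw [one_mul, mul_div_assoc', div_le_div_iff₀ h3 h2]
                    nlinarith
          _ ≤ ENNReal.ofReal (6 ^ p) * ENNReal.ofReal (1 / ((p - 1) * ((1 - r) + |θ|))) := by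
              rw [lintegral_const_mul' _ _ ENNReal.ofReal_ne_top]
              exact mul_le_mul_right (radial_int hp hm) _
          _ = _ := by
              rw [← ENNReal.ofReal_mul (by positivity), ← ENNReal.ofReal_mul (by positivity)]
              congr 1
              field_simp
    _ ≤ ENNReal.ofReal (6 ^ p / (p - 1)) * ENNReal.ofReal (2 * Real.log (((1 - r) + π) / (1 - r))) := by
        rw [lintegral_const_mul' _ _ ENNReal.ofReal_ne_top]
        exact mul_le_mul_right (angular_int hr) _
    _ ≤ _ := by
        rw [← ENNReal.ofReal_mul (by positivity)]
        apply ENNReal.ofReal_le_ofReal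
        apply mul_le_mul_of_nonneg_left _ (by positivity)
        have h1 : Real.log (((1 - r) + π) / (1 - r)) ≤ Real.log ((2 / (1 - r)) ^ 3) := by
          apply Real.log_le_log (by positivity)
          rw [div_pow, div_le_div_iff₀ hr (by positivity)]
          have := Real.pi_le_four
          have h3 : 1 - r ≤ 1 := by linarith
          have h5 : (1 - r) ^ 2 ≤ 1 := by nlinarith
          have h6 : ((1 - r) + π) * (1 - r) ^ 2 ≤ 5 * 1 := by
            apply mul_le_mul (by linarith) h5 (by positivity) (by norm_num)
          nlinarith
        rw [Real.log_pow] at h1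
        push_cast at h1
        linarith

lemma kernel_est {p : ℝ} (hp : 1 < p) {a : ℂ} (ha : ‖a‖ < 1) :
    ∫⁻ z in ball (0:ℂ) 1, ENNReal.ofReal ((1 - ‖z‖) ^ (p - 2) /
        ‖1 - (starRingEnd ℂ) a * z‖ ^ p) ∂dA ≤
      ENNReal.ofReal (6 ^ p / (p - 1) * (6 * Real.log (2 / (1 - ‖a‖)))) := by
  obtain ⟨ω, hω, haω⟩ : ∃ ω : ℂ, ‖ω‖ = 1 ∧ (starRingEnd ℂ) a * ω = (‖a‖ : ℂ) := by
    by_cases h : a = 0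
    · exact ⟨1, by simp, by simp [h]⟩
    · have h0 : (‖a‖ : ℂ) ≠ 0 := by simpa using h
      refine ⟨a / ‖a‖, by simp [h], ?_⟩
      rw [mul_div_assoc', mul_comm, Complex.mul_conj, Complex.normSq_eq_norm_sq]
      push_cast
      field_simp
  have hω0 : ω ≠ 0 := by intro h; simp [h] at hω
  have hd : ∀ z, HasDerivAt (fun z : ℂ => ω * z) ω z := by
    intro z; simpa using (hasDerivAt_id z).const_mul ω
  rw [change_var (fun z => ω * z) (fun z _ => (hd z).differentiableAt)]
  · refine le_trans (le_of_eq ?_) (kernel_real hp (norm_nonneg a) ha)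
    congr 1
    ext z
    rw [(hd z).deriv, hω, norm_mul, hω, ← mul_assoc, haω]
    simp
  · intro x _ y _ h
    exact mul_left_cancel₀ hω0 h
  · ext w
    simp only [mem_image, mem_D]
    constructor
    · rintro ⟨z, hz, rfl⟩; rw [norm_mul, hω, one_mul]; exact hz
    · intro hw
      exact ⟨w / ω, by rw [norm_div, hω, div_one]; exact hw, by field_simp⟩


lemma log_growth {f : ℂ → ℂ} (hf : HolOn f) {a : ℂ} (ha : ‖a‖ < 1) :
    ENNReal.ofReal (‖f a - f 0‖ ^ 2) ≤ ENNReal.ofReal (216 * Real.log (2 / (1 - ‖a‖))) *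
      ∫⁻ z in ball (0:ℂ) 1, ENNReal.ofReal (‖deriv f z‖ ^ 2) ∂dA := by
  have hmem : ∀ ρ ∈ Icc (0:ℝ) 1, ‖a * (ρ:ℂ) ^ 2‖ < 1 := by
    intro ρ hρ
    rw [norm_mul, norm_pow, Complex.norm_real, Real.norm_of_nonneg hρ.1]
    nlinarith [norm_nonneg a, hρ.1, hρ.2, mul_nonneg hρ.1 hρ.1, mul_nonneg hρ.1 (sub_nonneg.mpr hρ.2)]
  have hC : ContDiffOn ℝ 1 (fun ρ : ℝ => f (a * (ρ:ℂ) ^ 2)) (Icc 0 1) := by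
    have h1 : ContDiffOn ℝ 1 f (ball 0 1) := by
      have h2 : ContDiffOn ℂ 1 f (ball 0 1) := DifferentiableOn.contDiffOn hf isOpen_ball
      exact h2.restrict_scalars ℝ
    refine h1.comp (t := ball 0 1) (f := fun ρ : ℝ => a * (ρ:ℂ) ^ 2) (s := Icc 0 1) ?_ ?_
    · apply ContDiff.contDiffOn
      have : ContDiff ℝ 1 (fun ρ : ℝ => (ρ:ℂ)) := Complex.ofRealCLM.contDiff
      fun_prop
    · intro ρ hρ; exact mem_D.mpr (hmem ρ hρ)
  have hd : ∀ ρ ∈ Icc (0:ℝ) 1, deriv (fun ρ : ℝ => f (a * (ρ:ℂ) ^ 2)) ρ =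
      deriv f (a * (ρ:ℂ) ^ 2) * (a * (2 * ρ)) := by
    intro ρ hρ
    have h1 : HasDerivAt (fun t : ℂ => a * t ^ 2) (a * (2 * ρ)) (ρ:ℂ) := by
      simpa using (hasDerivAt_pow 2 (ρ:ℂ)).const_mul a
    have h2 := (hf.diffAt (hmem ρ hρ)).hasDerivAt
    exact ((h2.comp (ρ:ℂ) h1).comp_ofReal).deriv
  have h1 : ENNReal.ofReal ‖f a - f 0‖ ≤
      ∫⁻ ρ in Ioo (0:ℝ) 1, ENNReal.ofReal (2 * ρ) * ENNReal.ofReal ‖deriv f (a * (ρ:ℂ) ^ 2)‖ := by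
    have := enorm_sub_le_lintegral_deriv_of_contDiffOn_Icc hC zero_le_one
    simp only [ofReal_one, one_pow, mul_one, ofReal_zero, ne_eq, OfNat.ofNat_ne_zero,
      not_false_eq_true, zero_pow, mul_zero] at this
    rw [ofReal_norm]
    refine this.trans ?_
    rw [← restrict_Ioo_eq_restrict_Icc]
    refine setLIntegral_mono' measurableSet_Ioo ?_
    intro ρ hρ
    rw [hd ρ ⟨hρ.1.le, hρ.2.le⟩, ← ofReal_norm, ← ENNReal.ofReal_mul (by linarith [hρ.1])]
    apply ENNReal.ofReal_le_ofReal
    rw [norm_mul, norm_mul, norm_mul, Complex.norm_real, Real.norm_of_nonneg hρ.1.le, Complex.norm_ofNat, mul_comm]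
    have := hρ.1.le
    have : ‖a‖ * (2 * ρ) ≤ 2 * ρ := by nlinarith
    gcongr
  have hF : Measurable (fun z : ℂ => ENNReal.ofReal (‖deriv f z‖ / ‖1 - a * (starRingEnd ℂ) z‖)) := by
    have := measurable_deriv f
    have : Measurable (fun z : ℂ => (starRingEnd ℂ) z) := Complex.continuous_conj.measurable
    fun_prop
  have h2 : ENNReal.ofReal ‖f a - f 0‖ ≤
      ∫⁻ z in ball (0:ℂ) 1, ENNReal.ofReal (‖deriv f z‖ / ‖1 - a * (starRingEnd ℂ) z‖) ∂dA := by
    refine h1.trans ?_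
    rw [polar_iter _ hF, ← lintegral_const_mul' _ _ (by simp [Real.pi_pos])]
    refine setLIntegral_mono' measurableSet_Ioo ?_
    intro ρ hρ
    rw [lintegral_const_mul' _ _ ENNReal.ofReal_ne_top]
    calc _ ≤ ENNReal.ofReal (2 * ρ) * _ := mul_le_mul_right (cauchy_ineq hf.deriv ha hρ.1 hρ.2) _
      _ = _ := by
        rw [← mul_assoc, ← mul_assoc]
        congr 1
        rw [← ENNReal.ofReal_inv_of_pos (by positivity), ← ENNReal.ofReal_inv_of_pos (by positivity),
          ← ENNReal.ofReal_mul (by linarith [hρ.1]), ← ENNReal.ofReal_mul (by positivity)]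
        congr 1
        field_simp
  have h3 := ENNReal.lintegral_mul_le_Lp_mul_Lq (dA.restrict (ball 0 1))
    (p := 2) (q := 2) Real.HolderConjugate.two_two
    (f := fun z : ℂ => ENNReal.ofReal ‖deriv f z‖)
    (g := fun z : ℂ => ENNReal.ofReal (‖1 - (starRingEnd ℂ) a * z‖⁻¹))
    (by have := measurable_deriv f; fun_prop) (by fun_prop)
  have h4 : ∀ z : ℂ, ‖1 - a * (starRingEnd ℂ) z‖ = ‖1 - (starRingEnd ℂ) a * z‖ := by
    intro z; rw [← RCLike.norm_conj]; simp
  simp only [h4] at h2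
  have h5 : ENNReal.ofReal ‖f a - f 0‖ ≤ _ := h2.trans ((le_of_eq ?_).trans h3)
  · have h6 := ENNReal.rpow_le_rpow h5 (z := 2) (by norm_num)
    rw [ENNReal.mul_rpow_of_nonneg _ _ (by norm_num), ← ENNReal.rpow_mul, ← ENNReal.rpow_mul] at h6
    norm_num at h6
    simp only [← ofReal_norm, ← ENNReal.ofReal_pow (norm_nonneg _)] at h6
    refine h6.trans ?_
    rw [mul_comm]
    refine mul_le_mul_left ?_ _
    have h7 := kernel_est (p := 2) (by norm_num) ha
    norm_num at h7
    refine le_trans (le_of_eq ?_) (h7.trans (le_of_eq ?_))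
    · congr 1; ext z; rw [← ENNReal.ofReal_pow (by positivity), inv_pow]
    · rw [ENNReal.ofReal_mul (by norm_num), ENNReal.ofReal_ofNat, ← mul_assoc]; norm_num
  · congr 1; ext z
    simp only [Pi.mul_apply]
    rw [← ENNReal.ofReal_mul (by positivity)]; rfl


/-- The `Q_s` integral. -/
noncomputable def NQ (s : ℝ) (h : ℂ → ℂ) (a : ℂ) : ENNReal :=
  ∫⁻ z in ball (0:ℂ) 1, ENNReal.ofReal (‖deriv h z‖ ^ 2 * (1 - ‖phi a z‖ ^ 2) ^ s) ∂dA

/-- Coefficients selected by a binary sequence. -/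
noncomputable def cf (t : ℕ → Bool) (n : ℕ) : ℂ := if t n then (1 / 4 : ℂ) ^ n else 0

/-- The random sum. -/
noncomputable def FS (f : ℕ → ℂ → ℂ) (t : ℕ → Bool) (z : ℂ) : ℂ := ∑' n, cf t n * f n z

lemma cf_le (t : ℕ → Bool) (n : ℕ) : ‖cf t n‖ ≤ (1 / 4 : ℝ) ^ n := by
  unfold cf
  split_ifs
  · rw [norm_pow]; simp
  · simp

lemma sum_quarter (K : ℝ) : Summable (fun n : ℕ => (1 / 4 : ℝ) ^ n * K) :=
  (summable_geometric_of_lt_one (by norm_num) (by norm_num)).mul_right K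

lemma cf_cont (n : ℕ) : Continuous (fun t : ℕ → Bool => cf t n) := by
  have h : Continuous (fun b : Bool => if b then (1 / 4 : ℂ) ^ n else 0) := continuous_of_discreteTopology
  exact h.comp (continuous_apply n)

lemma cf_sum_cont {x : ℕ → ℂ} {K : ℝ} (hx : ∀ n, ‖x n‖ ≤ K) :
    Continuous (fun t : ℕ → Bool => ∑' n, cf t n * x n) := by
  refine continuous_tsum (fun n => (cf_cont n).mul continuous_const) (sum_quarter K) ?_
  intro n t
  rw [norm_mul]
  have := cf_le t n
  have h2 := hx n
  gcongr

lemma cf_summable {x : ℕ → ℂ} {K : ℝ} (hx : ∀ n, ‖x n‖ ≤ K) (t : ℕ → Bool) :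
    Summable (fun n => cf t n * x n) := by
  refine Summable.of_norm_bounded (sum_quarter K) ?_
  intro n
  rw [norm_mul]
  have := cf_le t n
  have h2 := hx n
  gcongr

lemma cf_update {x : ℕ → ℂ} {K : ℝ} (hx : ∀ n, ‖x n‖ ≤ K) (t : ℕ → Bool) (n : ℕ) :
    ∑' k, cf (Function.update t n true) k * x k - ∑' k, cf (Function.update t n false) k * x k =
      (1 / 4 : ℂ) ^ n * x n := by
  rw [← (cf_summable hx _).tsum_sub (cf_summable hx _), tsum_eq_single n]
  · simp [cf]
  · intro k hk
    simp [cf, Function.update_of_ne hk]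

def LocB (f : ℕ → ℂ → ℂ) : Prop := ∀ r : ℝ, r < 1 → ∃ K : ℝ, ∀ n z, ‖z‖ ≤ r →
  ‖f n z‖ ≤ K ∧ ‖deriv (f n) z‖ ≤ K

lemma FS_deriv {f : ℕ → ℂ → ℂ} (hf : ∀ n, HolOn (f n)) (hl : LocB f) (t : ℕ → Bool) {z : ℂ}
    (hz : ‖z‖ < 1) : HasDerivAt (FS f t) (∑' n, cf t n * deriv (f n) z) z := by
  obtain ⟨r, hzr, hr⟩ := exists_between hz
  obtain ⟨K, hK⟩ := hl r hr
  have hr0 : 0 < r := (norm_nonneg z).trans_lt hzr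
  have := hasDerivAt_tsum_of_isPreconnected (u := fun n : ℕ => (1 / 4 : ℝ) ^ n * K)
    (g := fun n z => cf t n * f n z) (g' := fun n z => cf t n * deriv (f n) z)
    (t := ball (0:ℂ) r) (y₀ := 0) (y := z) (sum_quarter K) isOpen_ball
    (convex_ball _ _).isPreconnected ?_ ?_ (by simpa using hr0)
    (cf_summable (fun n => (hK n 0 (by simpa using hr0.le)).1) t) (by simpa using hzr)
  · exact this
  · intro n y hy
    have hy : ‖y‖ < r := by simpa using hy
    exact ((hf n).diffAt (hy.trans hr)).hasDerivAt.const_mul _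
  · intro n y hy
    have hy : ‖y‖ < r := by simpa using hy
    rw [norm_mul]
    have := cf_le t n
    have h2 := (hK n y hy.le).2
    gcongr

lemma FS_hol {f : ℕ → ℂ → ℂ} (hf : ∀ n, HolOn (f n)) (hl : LocB f) (t : ℕ → Bool) : HolOn (FS f t) :=
  fun _ hz => (FS_deriv hf hl t (mem_D.mp hz)).differentiableAt.differentiableWithinAt

lemma sum_pow {p : ℝ} (hp : 1 < p) (y : ℕ → ENNReal) :
    (∑' n, (1 / 4 : ENNReal) ^ n * y n) ^ p ≤ 2 ^ p * ∑' n, (1 / 2 : ENNReal) ^ n * y n ^ p := by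
  have hp0 : 0 < p := by linarith
  set S := (∑' n, (1 / 2 : ENNReal) ^ n * y n ^ p) ^ p⁻¹ with hS
  have h1 : ∀ n, (1 / 2 : ENNReal) ^ n * y n ≤ S := by
    intro n
    rw [hS, ENNReal.le_rpow_inv_iff hp0, ENNReal.mul_rpow_of_nonneg _ _ hp0.le]
    refine le_trans ?_ (ENNReal.le_tsum n)
    gcongr
    have h2 : ((1 / 2 : ENNReal) ^ n) ≤ 1 := pow_le_one₀ (by simp) (by simp)
    calc ((1 / 2 : ENNReal) ^ n) ^ p ≤ ((1 / 2 : ENNReal) ^ n) ^ (1:ℝ) :=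
          ENNReal.rpow_le_rpow_of_exponent_ge h2 hp.le
      _ = _ := ENNReal.rpow_one _
  have h2 : ∑' n, (1 / 4 : ENNReal) ^ n * y n ≤ 2 * S := by
    calc _ ≤ ∑' n : ℕ, (1 / 2 : ENNReal) ^ n * S := by
          refine ENNReal.tsum_le_tsum ?_
          intro n
          have : (1 / 4 : ENNReal) = 1 / 2 * (1 / 2) := by
            simp only [one_div]
            rw [← ENNReal.mul_inv (by simp) (by simp)]; norm_num
          rw [this, mul_pow, mul_assoc]
          gcongr
          exact h1 n
      _ = _ := by
          rw [ENNReal.tsum_mul_right, ENNReal.tsum_geometric]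
          simp
  calc _ ≤ (2 * S) ^ p := by gcongr
    _ = _ := by
      rw [ENNReal.mul_rpow_of_nonneg _ _ hp0.le, hS, ENNReal.rpow_inv_rpow hp0.ne']

lemma FS_besov {p : ℝ} (hp : 1 < p) {f : ℕ → ℂ → ℂ} (hf : ∀ n, HolOn (f n)) (hl : LocB f)
    {K : ENNReal} (hK : K ≠ ⊤)
    (hB : ∀ n, ∫⁻ z in ball (0:ℂ) 1, ENNReal.ofReal ((1 - ‖z‖) ^ (p - 2) * ‖deriv (f n) z‖ ^ p) ∂dA ≤ K)
    (t : ℕ → Bool) : FS f t ∈ Besov p := by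
  refine ⟨FS_hol hf hl t, ?_⟩
  have hp0 : 0 < p := by linarith
  have h1 : ∀ z ∈ ball (0:ℂ) 1, ENNReal.ofReal ((1 - ‖z‖) ^ (p - 2) * ‖deriv (FS f t) z‖ ^ p) ≤
      2 ^ p * ∑' n, (1 / 2 : ENNReal) ^ n *
        ENNReal.ofReal ((1 - ‖z‖) ^ (p - 2) * ‖deriv (f n) z‖ ^ p) := by
    intro z hz
    have hz := mem_D.mp hz
    have hz1 : 0 < 1 - ‖z‖ := by linarith
    rw [(FS_deriv hf hl t hz).deriv, ENNReal.ofReal_mul (by positivity)]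
    have h2 : ENNReal.ofReal (‖∑' n, cf t n * deriv (f n) z‖ ^ p) ≤
        2 ^ p * ∑' n, (1 / 2 : ENNReal) ^ n * ENNReal.ofReal (‖deriv (f n) z‖) ^ p := by
      refine le_trans ?_ (sum_pow hp _)
      rw [← ENNReal.ofReal_rpow_of_nonneg (by positivity) hp0.le, ofReal_norm]
      gcongr
      refine enorm_tsum_le_tsum_enorm.trans ?_
      refine ENNReal.tsum_le_tsum ?_
      intro n
      rw [enorm_mul, ofReal_norm]
      gcongr
      rw [← ofReal_norm]
      refine (ENNReal.ofReal_le_ofReal (cf_le t n)).trans (le_of_eq ?_)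
      rw [ENNReal.ofReal_pow (by norm_num), ENNReal.ofReal_div_of_pos (by norm_num)]
      simp
    refine (mul_le_mul_right h2 _).trans (le_of_eq ?_)
    rw [mul_left_comm, ← ENNReal.tsum_mul_left]
    congr 2
    ext n
    rw [mul_left_comm, ENNReal.ofReal_mul (by positivity), ENNReal.ofReal_rpow_of_nonneg (by positivity) hp0.le]
  refine (setLIntegral_mono' measurableSet_ball h1).trans_lt ?_
  rw [lintegral_const_mul' _ _ (by finiteness), lintegral_tsum]
  · have h3 : ∀ n, ∫⁻ z in ball (0:ℂ) 1, (1 / 2 : ENNReal) ^ n *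
        ENNReal.ofReal ((1 - ‖z‖) ^ (p - 2) * ‖deriv (f n) z‖ ^ p) ∂dA ≤ (1 / 2 : ENNReal) ^ n * K := by
      intro n
      rw [lintegral_const_mul' _ _ (by finiteness)]
      exact mul_le_mul_right (hB n) _
    refine (mul_le_mul_right (ENNReal.tsum_le_tsum h3) _).trans_lt ?_
    rw [ENNReal.tsum_mul_right, ENNReal.tsum_geometric]
    simp
    finiteness
  · intro n
    have := measurable_deriv (f n)
    exact (by fun_prop : Measurable _).aemeasurable

lemma mul_FS_deriv {f : ℕ → ℂ → ℂ} {g : ℂ → ℂ} (hg : HolOn g) (hf : ∀ n, HolOn (f n)) (hl : LocB f)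
    (t : ℕ → Bool) {z : ℂ} (hz : ‖z‖ < 1) : deriv (fun z => g z * FS f t z) z =
      deriv g z * (∑' n, cf t n * f n z) + g z * (∑' n, cf t n * deriv (f n) z) :=
  ((hg.diffAt hz).hasDerivAt.mul (FS_deriv hf hl t hz)).deriv

lemma NQ_closed {f : ℕ → ℂ → ℂ} {g : ℂ → ℂ} (hg : HolOn g) (hf : ∀ n, HolOn (f n)) (hl : LocB f)
    (s : ℝ) (m : ENNReal) (a : ℂ) : IsClosed {t | NQ s (fun z => g z * FS f t z) a ≤ m} := by
  apply IsSeqClosed.isClosed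
  intro t t0 ht hlim
  simp only [mem_ofPred_eq] at ht ⊢
  have hmp := measurable_phi2
  unfold NQ at ht ⊢
  have h1 : ∀ z ∈ ball (0:ℂ) 1, ENNReal.ofReal (‖deriv (fun z => g z * FS f t0 z) z‖ ^ 2 *
      (1 - ‖phi a z‖ ^ 2) ^ s) ≤ liminf (fun k => ENNReal.ofReal
        (‖deriv (fun z => g z * FS f (t k) z) z‖ ^ 2 * (1 - ‖phi a z‖ ^ 2) ^ s)) atTop := by
    intro z hz
    have hz := mem_D.mp hz
    obtain ⟨K, hK⟩ := hl ‖z‖ hz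
    apply le_of_eq
    symm
    apply Tendsto.liminf_eq
    apply ENNReal.tendsto_ofReal
    simp only [mul_FS_deriv hg hf hl _ hz]
    have c1 := ((cf_sum_cont (fun n => (hK n z le_rfl).1)).tendsto t0).comp hlim
    have c2 := ((cf_sum_cont (fun n => (hK n z le_rfl).2)).tendsto t0).comp hlim
    exact ((((c1.const_mul _).add (c2.const_mul _)).norm.pow 2).mul_const _)
  refine (setLIntegral_mono' measurableSet_ball h1).trans ?_
  refine (lintegral_liminf_le ?_).trans ?_
  · intro k
    have := measurable_deriv (fun z => g z * FS f (t k) z)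
    have : Measurable (phi a) := hmp.comp (by fun_prop : Measurable (fun z : ℂ => (a, z)))
    fun_prop
  · apply liminf_le_of_frequently_le'
    exact Frequently.of_forall ht

lemma ubp_seq {p s : ℝ} (hp : 1 < p) {g : ℂ → ℂ} (hg : HolOn g)
    (hM : MapsInto (Mg g) (Besov p) (Qs s)) {f : ℕ → ℂ → ℂ} (hf : ∀ n, HolOn (f n)) (hl : LocB f)
    {K : ENNReal} (hK : K ≠ ⊤)
    (hB : ∀ n, ∫⁻ z in ball (0:ℂ) 1, ENNReal.ofReal ((1 - ‖z‖) ^ (p - 2) * ‖deriv (f n) z‖ ^ p) ∂dA ≤ K) :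
    ∃ m : ℕ, ∀ᶠ n in atTop, ∀ a : ℂ, ‖a‖ < 1 → NQ s (fun z => g z * f n z) a ≤ 16 ^ n * (4 * m) := by
  set A : ℕ → Set (ℕ → Bool) := fun m => {t | ∀ a : ℂ, ‖a‖ < 1 → NQ s (fun z => g z * FS f t z) a ≤ m}
    with hA
  have hcl : ∀ m, IsClosed (A m) := by
    intro m
    have : A m = ⋂ a : ℂ, ⋂ _ : ‖a‖ < 1, {t | NQ s (fun z => g z * FS f t z) a ≤ m} := by
      ext t; simp [hA]
    rw [this]
    exact isClosed_iInter fun a => isClosed_iInter fun _ => NQ_closed hg hf hl s m a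
  have hun : ⋃ m, A m = univ := by
    rw [eq_univ_iff_forall]
    intro t
    have h1 := (hM _ (FS_besov hp hf hl hK hB t)).2
    obtain ⟨m, hm⟩ := ENNReal.exists_nat_gt h1.ne
    refine mem_iUnion.mpr ⟨m, ?_⟩
    intro a ha
    refine le_trans ?_ hm.le
    exact le_iSup₂_of_le a (mem_D.mpr ha) le_rfl
  obtain ⟨m, t0, ht0⟩ := nonempty_interior_of_iUnion_of_closed hcl hun
  refine ⟨m, ?_⟩
  have hten : ∀ b : Bool, Tendsto (fun n => Function.update t0 n b) atTop (nhds t0) := by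
    intro b
    rw [tendsto_pi_nhds]
    intro i
    apply tendsto_const_nhds.congr'
    filter_upwards [eventually_gt_atTop i] with n hn
    rw [Function.update_of_ne hn.ne]
  have hev : ∀ b : Bool, ∀ᶠ n in atTop, Function.update t0 n b ∈ A m := fun b =>
    (hten b).eventually (mem_interior_iff_mem_nhds.mp ht0)
  filter_upwards [hev true, hev false] with n h1 h2 a ha
  have h1 := h1 a ha
  have h2 := h2 a ha
  have hmp := measurable_phi2
  have hmpa : Measurable (phi a) := hmp.comp (by fun_prop : Measurable (fun z : ℂ => (a, z)))
  set t1 := Function.update t0 n true with ht1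
  set t2 := Function.update t0 n false with ht2
  have hpt : ∀ z ∈ ball (0:ℂ) 1, ENNReal.ofReal (‖deriv (fun z => g z * f n z) z‖ ^ 2 *
      (1 - ‖phi a z‖ ^ 2) ^ s) ≤ 16 ^ n * (2 * ENNReal.ofReal
        (‖deriv (fun z => g z * FS f t1 z) z‖ ^ 2 * (1 - ‖phi a z‖ ^ 2) ^ s) + 2 * ENNReal.ofReal
        (‖deriv (fun z => g z * FS f t2 z) z‖ ^ 2 * (1 - ‖phi a z‖ ^ 2) ^ s)) := by
    intro z hz
    have hz := mem_D.mp hz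
    have hw : 0 ≤ (1 - ‖phi a z‖ ^ 2) ^ s := by have := one_sub_phi_pos ha hz; positivity
    obtain ⟨K, hK⟩ := hl ‖z‖ hz
    have e1 := cf_update (fun n => (hK n z le_rfl).1) t0 n
    have e2 := cf_update (fun n => (hK n z le_rfl).2) t0 n
    have e3 : deriv (fun z => g z * f n z) z = deriv g z * f n z + g z * deriv (f n) z :=
      ((hg.diffAt hz).hasDerivAt.mul ((hf n).diffAt hz).hasDerivAt).deriv
    have e4 : deriv (fun z => g z * f n z) z = 4 ^ n * (deriv (fun z => g z * FS f t1 z) z -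
        deriv (fun z => g z * FS f t2 z) z) := by
      rw [mul_FS_deriv hg hf hl _ hz, mul_FS_deriv hg hf hl _ hz, e3]
      have : (4:ℂ) ^ n * (1 / 4) ^ n = 1 := by rw [← mul_pow]; norm_num
      linear_combination (-(4:ℂ) ^ n * deriv g z) * e1 - (4:ℂ) ^ n * g z * e2 -
        (deriv g z * f n z + g z * deriv (f n) z) * this
    set x := deriv (fun z => g z * FS f t1 z) z
    set y := deriv (fun z => g z * FS f t2 z) z
    have e5 : ‖deriv (fun z => g z * f n z) z‖ ^ 2 ≤ 16 ^ n * (2 * ‖x‖ ^ 2 + 2 * ‖y‖ ^ 2) := by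
      rw [e4, norm_mul, mul_pow, norm_pow, ← pow_mul, mul_comm n 2, pow_mul]
      norm_num
      have := norm_sub_le x y
      have h3 : ‖x - y‖ ^ 2 ≤ (‖x‖ + ‖y‖) ^ 2 := by gcongr
      nlinarith [sq_nonneg (‖x‖ - ‖y‖)]
    rw [show (16:ENNReal) = ENNReal.ofReal 16 by simp, show (2:ENNReal) = ENNReal.ofReal 2 by simp,
      ← ENNReal.ofReal_pow (by norm_num), ← ENNReal.ofReal_mul (by norm_num), ← ENNReal.ofReal_mul (by norm_num),
      ← ENNReal.ofReal_add (by positivity) (by positivity), ← ENNReal.ofReal_mul (by positivity)]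
    apply ENNReal.ofReal_le_ofReal
    nlinarith [mul_le_mul_of_nonneg_right e5 hw]
  refine (setLIntegral_mono' measurableSet_ball hpt).trans ?_
  rw [lintegral_const_mul' _ _ (by finiteness)]
  refine mul_le_mul_right ?_ _
  rw [lintegral_add_left, lintegral_const_mul' _ _ (by finiteness), lintegral_const_mul' _ _ (by finiteness)]
  · refine (add_le_add (mul_le_mul_right h1 2) (mul_le_mul_right h2 2)).trans (le_of_eq ?_)
    ring
  · have := measurable_deriv (fun z => g z * FS f t1 z)
    fun_prop

lemma ubp {p s : ℝ} (hp : 1 < p) {g : ℂ → ℂ} (hg : HolOn g)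
    (hM : MapsInto (Mg g) (Besov p) (Qs s)) {f : ℂ → ℂ → ℂ} (hf : ∀ b, ‖b‖ < 1 → HolOn (f b))
    (hl : ∀ r : ℝ, r < 1 → ∃ K : ℝ, ∀ b z, ‖b‖ < 1 → ‖z‖ ≤ r → ‖f b z‖ ≤ K ∧ ‖deriv (f b) z‖ ≤ K)
    {K : ENNReal} (hK : K ≠ ⊤)
    (hB : ∀ b, ‖b‖ < 1 →
      ∫⁻ z in ball (0:ℂ) 1, ENNReal.ofReal ((1 - ‖z‖) ^ (p - 2) * ‖deriv (f b) z‖ ^ p) ∂dA ≤ K) :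
    ∃ C : ENNReal, C ≠ ⊤ ∧ ∀ b a : ℂ, ‖b‖ < 1 → ‖a‖ < 1 → NQ s (fun z => g z * f b z) a ≤ C := by
  by_contra! hcon
  choose! b a hb ha hab using fun n : ℕ => hcon (16 ^ n * (4 * n)) (by finiteness)
  obtain ⟨m, hm⟩ := ubp_seq hp hg hM (f := fun n => f (b n)) (fun n => hf _ (hb n))
    (fun r hr => by
      obtain ⟨K, hK⟩ := hl r hr
      exact ⟨K, fun n z hz => hK _ z (hb n) hz⟩) hK (fun n => hB _ (hb n))
  obtain ⟨n, hn, hnm⟩ := (hm.and (eventually_ge_atTop m)).exists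
  have h1 := (hab n).trans_le (hn (a n) (ha n))
  refine absurd h1 (not_lt.mpr ?_)
  gcongr


lemma wt_le {p : ℝ} (hp2 : p ≤ 2) {z : ℂ} (hz : ‖z‖ < 1) :
    (1 - ‖z‖ ^ 2) ^ (p - 2) ≤ (1 - ‖z‖) ^ (p - 2) := by
  apply Real.rpow_le_rpow_of_nonpos (by linarith) _ (by linarith)
  nlinarith [norm_nonneg z]

lemma wt_ge {p : ℝ} (hp2 : p ≤ 2) {z : ℂ} (hz : ‖z‖ < 1) :
    (1 - ‖z‖) ^ (p - 2) ≤ 2 ^ (2 - p) * (1 - ‖z‖ ^ 2) ^ (p - 2) := by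
  have h1 : 0 < 1 - ‖z‖ := by linarith
  have h2 := one_sub_sq_pos hz
  have h3 : ((1 - ‖z‖ ^ 2) / 2) ≤ 1 - ‖z‖ := by nlinarith [norm_nonneg z]
  refine (Real.rpow_le_rpow_of_nonpos (by positivity) h3 (by linarith)).trans (le_of_eq ?_)
  rw [Real.div_rpow h2.le (by norm_num), div_eq_mul_inv, ← Real.rpow_neg (by norm_num), neg_sub, mul_comm]

lemma bes_conv {p : ℝ} (hp2 : p ≤ 2) (f : ℂ → ℂ) :
    ∫⁻ z in ball (0:ℂ) 1, ENNReal.ofReal (‖deriv f z‖ ^ p * (1 - ‖z‖ ^ 2) ^ (p - 2)) ∂dA ≤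
    ∫⁻ z in ball (0:ℂ) 1, ENNReal.ofReal ((1 - ‖z‖) ^ (p - 2) * ‖deriv f z‖ ^ p) ∂dA := by
  refine setLIntegral_mono' measurableSet_ball ?_
  intro z hz
  apply ENNReal.ofReal_le_ofReal
  rw [mul_comm]
  have := wt_le hp2 (mem_D.mp hz)
  gcongr

lemma bes_conv2 {p : ℝ} (hp2 : p ≤ 2) (f : ℂ → ℂ) :
    ∫⁻ z in ball (0:ℂ) 1, ENNReal.ofReal ((1 - ‖z‖) ^ (p - 2) * ‖deriv f z‖ ^ p) ∂dA ≤
    ENNReal.ofReal (2 ^ (2 - p)) *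
      ∫⁻ z in ball (0:ℂ) 1, ENNReal.ofReal (‖deriv f z‖ ^ p * (1 - ‖z‖ ^ 2) ^ (p - 2)) ∂dA := by
  rw [← lintegral_const_mul' _ _ ENNReal.ofReal_ne_top]
  refine setLIntegral_mono' measurableSet_ball ?_
  intro z hz
  rw [← ENNReal.ofReal_mul (by positivity)]
  apply ENNReal.ofReal_le_ofReal
  have := wt_ge hp2 (mem_D.mp hz)
  calc _ ≤ (2 ^ (2 - p) * (1 - ‖z‖ ^ 2) ^ (p - 2)) * ‖deriv f z‖ ^ p := by gcongr
    _ = _ := by ring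

lemma Wt_fin {p : ℝ} (hp1 : 1 < p) (hp2 : p ≤ 2) : Wt (p - 2) ≠ ⊤ := by
  have h := kernel_est hp1 (a := 0) (by simp)
  refine ne_top_of_le_ne_top ENNReal.ofReal_ne_top (le_trans ?_ h)
  refine setLIntegral_mono' measurableSet_ball ?_
  intro z hz
  apply ENNReal.ofReal_le_ofReal
  simpa using wt_le hp2 (mem_D.mp hz)

lemma phi_hol {a : ℂ} (ha : ‖a‖ < 1) : HolOn (phi a) :=
  fun _ hz => (phi_deriv ha (mem_D.mp hz)).differentiableAt.differentiableWithinAt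

lemma phi_bes {p : ℝ} (hp2 : p ≤ 2) {a : ℂ} (ha : ‖a‖ < 1) :
    ∫⁻ z in ball (0:ℂ) 1, ENNReal.ofReal ((1 - ‖z‖) ^ (p - 2) * ‖deriv (phi a) z‖ ^ p) ∂dA ≤
      ENNReal.ofReal (2 ^ (2 - p)) * Wt (p - 2) := by
  refine (bes_conv2 hp2 _).trans (le_of_eq ?_)
  have h := inv_B (f := fun z => z) (differentiableOn_id) ha p
  congr 1
  refine h.symm.trans ?_
  unfold Wt
  simp

lemma test_phi {p s : ℝ} (hp1 : 1 < p) (hp2 : p ≤ 2) {g : ℂ → ℂ} (hg : HolOn g)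
    (hM : MapsInto (Mg g) (Besov p) (Qs s)) : g ∈ Hinf := by
  obtain ⟨C, hC, h⟩ := ubp hp1 hg hM (f := phi) (fun b hb => phi_hol hb)
    (fun r hr => by
      refine ⟨1 / (1 - max r 0), fun b z hb hz => ?_⟩
      have hr' : max r 0 < 1 := max_lt hr one_pos
      have hz1 : ‖z‖ ≤ max r 0 := hz.trans (le_max_left _ _)
      have h0 : 0 ≤ max r 0 := le_max_right _ _
      have hz2 : ‖z‖ < 1 := hz1.trans_lt hr'
      constructor
      · refine (phi_lt hb hz2).le.trans ?_
        rw [le_div_iff₀ (by linarith)]; linarith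
      · have e := norm_phi_deriv hb hz2
        rw [le_div_iff₀ (by linarith)]
        have : 1 - max r 0 ≤ 1 - ‖z‖ ^ 2 := by nlinarith [norm_nonneg z]
        calc _ ≤ ‖deriv (phi b) z‖ * (1 - ‖z‖ ^ 2) := by gcongr
          _ ≤ 1 := by rw [e]; nlinarith [sq_nonneg ‖phi b z‖])
    (K := ENNReal.ofReal (2 ^ (2 - p)) * Wt (p - 2))
    (ENNReal.mul_ne_top ENNReal.ofReal_ne_top (Wt_fin hp1 hp2)) (fun b hb => phi_bes hp2 hb)
  refine ⟨hg, √(C / Wt s).toReal, ?_⟩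
  intro a ha
  have ha := mem_D.mp ha
  have h1 := h a a ha ha
  have hh : HolOn (fun z => g z * phi a z) := DifferentiableOn.mul hg (phi_hol ha)
  have h2 := (bloch_Q hh ha s).trans h1
  have e1 : deriv (fun z => g z * phi a z) a = g a * deriv (phi a) a := by
    have := ((hg.diffAt ha).hasDerivAt.mul ((phi_hol ha).diffAt ha).hasDerivAt).deriv
    refine this.trans ?_
    rw [phi_self]; ring
  have e2 := norm_phi_deriv ha ha
  rw [phi_self] at e2
  simp at e2
  have e3 : (1 - ‖a‖ ^ 2) ^ 2 * ‖deriv (fun z => g z * phi a z) a‖ ^ 2 = ‖g a‖ ^ 2 := by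
    rw [e1, norm_mul]
    linear_combination (‖g a‖ ^ 2 * (‖deriv (phi a) a‖ * (1 - ‖a‖ ^ 2) + 1)) * e2
  rw [e3, ← ENNReal.le_div_iff_mul_le (Or.inl (Wt_pos s)) (Or.inr hC)] at h2
  have h3 := ENNReal.toReal_mono (ENNReal.div_ne_top hC (Wt_pos s)) h2
  rw [ENNReal.toReal_ofReal (by positivity)] at h3
  exact Real.le_sqrt_of_sq_le h3

/-- The logarithmic test functions. -/
noncomputable def LF (p : ℝ) (b z : ℂ) : ℂ :=
  ((Real.log 4 : ℝ) - Complex.log (1 - (starRingEnd ℂ) b * z)) /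
    ((Real.log (2 / (1 - ‖b‖)) ^ (1 / p) : ℝ) : ℂ)

lemma lam_ge {b : ℂ} (hb : ‖b‖ < 1) : Real.log 2 ≤ Real.log (2 / (1 - ‖b‖)) := by
  apply Real.log_le_log (by norm_num)
  rw [le_div_iff₀ (by linarith)]
  linarith [norm_nonneg b]

lemma log2_pos : 0 < Real.log 2 := Real.log_pos (by norm_num)

lemma lam_pos {b : ℂ} (hb : ‖b‖ < 1) : 0 < Real.log (2 / (1 - ‖b‖)) := log2_pos.trans_le (lam_ge hb)

lemma norm_bz {b z : ℂ} (hb : ‖b‖ < 1) : ‖(starRingEnd ℂ) b * z‖ ≤ ‖z‖ := by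
  rw [norm_mul, RCLike.norm_conj]
  nlinarith [norm_nonneg b, norm_nonneg z]

lemma LF_deriv (p : ℝ) {b z : ℂ} (hb : ‖b‖ < 1) (hz : ‖z‖ < 1) :
    HasDerivAt (LF p b) ((starRingEnd ℂ) b / (1 - (starRingEnd ℂ) b * z) /
      ((Real.log (2 / (1 - ‖b‖)) ^ (1 / p) : ℝ) : ℂ)) z := by
  have h1 : HasDerivAt (fun z => 1 - (starRingEnd ℂ) b * z) (-(starRingEnd ℂ) b) z := by
    simpa using ((hasDerivAt_id z).const_mul ((starRingEnd ℂ) b)).const_sub 1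
  have h2 : (1 - (starRingEnd ℂ) b * z) ∈ Complex.slitPlane := by
    left
    have := (Complex.re_le_norm ((starRingEnd ℂ) b * z)).trans (norm_bz hb)
    rw [Complex.sub_re, Complex.one_re]; linarith
  have h3 := ((h1.clog h2).const_sub ((Real.log 4 : ℝ) : ℂ)).div_const
    ((Real.log (2 / (1 - ‖b‖)) ^ (1 / p) : ℝ) : ℂ)
  refine h3.congr_deriv ?_
  ring

lemma LF_hol (p : ℝ) {b : ℂ} (hb : ‖b‖ < 1) : HolOn (LF p b) :=
  fun _ hz => (LF_deriv p hb (mem_D.mp hz)).differentiableAt.differentiableWithinAt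

lemma LF_loc {p : ℝ} (hp : 1 < p) (r : ℝ) (hr : r < 1) : ∃ K : ℝ, ∀ b z, ‖b‖ < 1 → ‖z‖ ≤ r →
    ‖LF p b z‖ ≤ K ∧ ‖deriv (LF p b) z‖ ≤ K := by
  refine ⟨(Real.log 4 + (1 - max r 0)⁻¹ + 1) / Real.log 2 ^ (1 / p), fun b z hb hz => ?_⟩
  have hr' : max r 0 < 1 := max_lt hr one_pos
  have hz1 : ‖z‖ ≤ max r 0 := hz.trans (le_max_left _ _)
  have hz2 : ‖z‖ < 1 := hz1.trans_lt hr'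
  have hi : 0 < (1 - max r 0)⁻¹ := inv_pos.mpr (by linarith)
  have hl4 : 0 < Real.log 4 := Real.log_pos (by norm_num)
  have hL := lam_pos hb
  have hL2 := lam_ge hb
  have hl2 := log2_pos
  have hden : Real.log 2 ^ (1 / p) ≤ Real.log (2 / (1 - ‖b‖)) ^ (1 / p) := by gcongr
  have hd0 : 0 < Real.log 2 ^ (1 / p) := by positivity
  have hbz : ‖(starRingEnd ℂ) b * z‖ ≤ max r 0 := (norm_bz hb).trans hz1
  have hn : ‖((Real.log (2 / (1 - ‖b‖)) ^ (1 / p) : ℝ) : ℂ)‖ = Real.log (2 / (1 - ‖b‖)) ^ (1 / p) := by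
    rw [Complex.norm_real, Real.norm_of_nonneg (by positivity)]
  constructor
  · unfold LF
    rw [norm_div, hn]
    apply div_le_div₀ (by positivity) _ hd0 hden
    refine (norm_sub_le _ _).trans ?_
    rw [Complex.norm_real, Real.norm_of_nonneg hl4.le]
    have h1 := Complex.norm_log_one_add_le (z := -((starRingEnd ℂ) b * z)) (by rw [norm_neg]; linarith)
    rw [norm_neg, ← sub_eq_add_neg] at h1
    set x := ‖(starRingEnd ℂ) b * z‖
    have hx0 : 0 ≤ x := norm_nonneg _
    have h2 : (1 - x)⁻¹ ≤ (1 - max r 0)⁻¹ := inv_anti₀ (by linarith) (by linarith)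
    have h3 : x ^ 2 * (1 - x)⁻¹ / 2 ≤ (1 - max r 0)⁻¹ := by
      have : x ^ 2 ≤ 1 := by nlinarith
      have h5 : 0 < (1 - x)⁻¹ := inv_pos.mpr (by linarith)
      nlinarith
    linarith
  · rw [(LF_deriv p hb hz2).deriv, norm_div, hn]
    apply div_le_div₀ (by positivity) _ hd0 hden
    rw [norm_div, RCLike.norm_conj]
    have h3 : 1 - max r 0 ≤ ‖1 - (starRingEnd ℂ) b * z‖ := by
      have := norm_sub_norm_le 1 ((starRingEnd ℂ) b * z)
      rw [norm_one] at this; linarith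
    have h4 : ‖b‖ / ‖1 - (starRingEnd ℂ) b * z‖ ≤ 1 / (1 - max r 0) :=
      div_le_div₀ (by norm_num) hb.le (by linarith) h3
    rw [one_div] at h4
    linarith

lemma LF_bes {p : ℝ} (hp : 1 < p) {b : ℂ} (hb : ‖b‖ < 1) :
    ∫⁻ z in ball (0:ℂ) 1, ENNReal.ofReal ((1 - ‖z‖) ^ (p - 2) * ‖deriv (LF p b) z‖ ^ p) ∂dA ≤
      ENNReal.ofReal (6 ^ p / (p - 1) * 6) := by
  have hL := lam_pos hb
  set L := Real.log (2 / (1 - ‖b‖)) with hLd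
  have hp0 : 0 < p := by linarith
  have h1 : ∀ z ∈ ball (0:ℂ) 1, ENNReal.ofReal ((1 - ‖z‖) ^ (p - 2) * ‖deriv (LF p b) z‖ ^ p) ≤
      ENNReal.ofReal L⁻¹ * ENNReal.ofReal ((1 - ‖z‖) ^ (p - 2) / ‖1 - (starRingEnd ℂ) b * z‖ ^ p) := by
    intro z hz
    have hz := mem_D.mp hz
    have hz1 : 0 < 1 - ‖z‖ := by linarith
    have hne : 0 < ‖1 - (starRingEnd ℂ) b * z‖ := norm_pos_iff.mpr (one_sub_conj_mul_ne hb hz)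
    rw [← ENNReal.ofReal_mul (by positivity)]
    apply ENNReal.ofReal_le_ofReal
    rw [(LF_deriv p hb hz).deriv, norm_div, norm_div, RCLike.norm_conj, Complex.norm_real,
      Real.norm_of_nonneg (by positivity), Real.div_rpow (by positivity) (by positivity),
      Real.div_rpow (by positivity) (by positivity), ← Real.rpow_mul hL.le, one_div,
      inv_mul_cancel₀ hp0.ne', Real.rpow_one]
    have hb1 : ‖b‖ ^ p ≤ 1 := Real.rpow_le_one (norm_nonneg _) hb.le hp0.le
    calc _ ≤ (1 - ‖z‖) ^ (p - 2) * (1 / ‖1 - (starRingEnd ℂ) b * z‖ ^ p / L) := by gcongr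
      _ = _ := by ring
  refine (setLIntegral_mono' measurableSet_ball h1).trans ?_
  rw [lintegral_const_mul' _ _ ENNReal.ofReal_ne_top]
  refine (mul_le_mul_right (kernel_est hp hb) _).trans (le_of_eq ?_)
  rw [← ENNReal.ofReal_mul (by positivity), ← hLd]
  congr 1
  field_simp

lemma LF_self {p : ℝ} {b : ℂ} (hb : ‖b‖ < 1) :
    Real.log (2 / (1 - ‖b‖)) ^ (1 - 1 / p) ≤ ‖LF p b b‖ := by
  have hL := lam_pos hb
  have h1 := one_sub_sq_pos hb
  have e : 1 - (starRingEnd ℂ) b * b = ((1 - ‖b‖ ^ 2 : ℝ) : ℂ) := by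
    rw [mul_comm, Complex.mul_conj, Complex.normSq_eq_norm_sq]; push_cast; rfl
  unfold LF
  rw [e, ← Complex.ofReal_log h1.le, ← Complex.ofReal_sub, ← Complex.ofReal_div, Complex.norm_real,
    Real.rpow_sub hL, Real.rpow_one]
  refine le_trans ?_ (Real.le_norm_self _)
  gcongr
  rw [← Real.log_div (by norm_num) h1.ne']
  have h2 : 0 < 1 - ‖b‖ := by linarith
  apply Real.log_le_log (by positivity)
  rw [div_le_div_iff₀ h2 h1]
  nlinarith [norm_nonneg b]


/-- The integral controlled by `trick_T`. -/
noncomputable def TQ (s : ℝ) (g f : ℂ → ℂ) (a : ℂ) : ENNReal :=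
  ∫⁻ z in ball (0:ℂ) 1, ENNReal.ofReal (‖deriv g z‖ ^ 2 * ‖f z - f a‖ ^ 2 *
        (1 - ‖phi a z‖ ^ 2) ^ s) ∂dA

lemma meas_NQ (s : ℝ) (h : ℂ → ℂ) (a : ℂ) : Measurable (fun z =>
    ENNReal.ofReal (‖deriv h z‖ ^ 2 * (1 - ‖phi a z‖ ^ 2) ^ s)) := by
  have := measurable_deriv h
  have : Measurable (phi a) := measurable_phi2.comp (by fun_prop : Measurable (fun z : ℂ => (a, z)))
  fun_prop

lemma three_int {α : Type*} [MeasurableSpace α] {ν : Measure α} {S : Set α} (hS : MeasurableSet S)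
    {u v w x : α → ℝ} {c1 c2 c3 c4 : ℝ} (h1 : 0 ≤ c1) (h2 : 0 ≤ c2) (h3 : 0 ≤ c3) (h4 : 0 ≤ c4)
    (hu : ∀ z ∈ S, 0 ≤ u z) (hv : ∀ z ∈ S, 0 ≤ v z) (hw : ∀ z ∈ S, 0 ≤ w z)
    (mv : Measurable (fun z => ENNReal.ofReal (v z))) (mw : Measurable (fun z => ENNReal.ofReal (w z)))
    (hx : ∀ z ∈ S, c4 * x z ≤ c1 * u z + c2 * v z + c3 * w z) :
    ENNReal.ofReal c4 * ∫⁻ z in S, ENNReal.ofReal (x z) ∂ν ≤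
      ENNReal.ofReal c1 * ∫⁻ z in S, ENNReal.ofReal (u z) ∂ν +
      ENNReal.ofReal c2 * ∫⁻ z in S, ENNReal.ofReal (v z) ∂ν +
      ENNReal.ofReal c3 * ∫⁻ z in S, ENNReal.ofReal (w z) ∂ν := by
  simp only [← lintegral_const_mul' _ _ ENNReal.ofReal_ne_top]
  rw [← lintegral_add_right _ (mv.const_mul _), ← lintegral_add_right _ (mw.const_mul _)]
  refine setLIntegral_mono' hS ?_
  intro z hz
  have := hu z hz
  have := hv z hz
  have := hw z hz
  rw [← ENNReal.ofReal_mul h1, ← ENNReal.ofReal_mul h2, ← ENNReal.ofReal_mul h3, ← ENNReal.ofReal_mul h4,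
    ← ENNReal.ofReal_add (by positivity) (by positivity), ← ENNReal.ofReal_add (by positivity) (by positivity)]
  exact ENNReal.ofReal_le_ofReal (hx z hz)

lemma sq_add_le (x y : ℝ) : (x + y) ^ 2 ≤ 2 * x ^ 2 + 2 * y ^ 2 := by
  nlinarith [sq_nonneg (x - y)]

lemma prodL {s : ℝ} {g f : ℂ → ℂ} (hg : HolOn g) (hf : HolOn f) {C : ℝ}
    (hC : ∀ z ∈ ball (0:ℂ) 1, ‖g z‖ ≤ C) {a : ℂ} (ha : ‖a‖ < 1) :
    ENNReal.ofReal (‖f a‖ ^ 2) * NQ s g a ≤ ENNReal.ofReal 2 * TQ s g f a +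
      ENNReal.ofReal 4 * NQ s (fun z => g z * f z) a + ENNReal.ofReal (4 * C ^ 2) * NQ s f a := by
  unfold NQ TQ
  have hw : ∀ z ∈ ball (0:ℂ) 1, 0 ≤ (1 - ‖phi a z‖ ^ 2) ^ s := by
    intro z hz
    have := one_sub_phi_pos ha (mem_D.mp hz)
    positivity
  refine three_int measurableSet_ball (by norm_num) (by norm_num) (by positivity) (by positivity)
    (fun z hz => mul_nonneg (by positivity) (hw z hz)) (fun z hz => mul_nonneg (by positivity) (hw z hz))
    (fun z hz => mul_nonneg (by positivity) (hw z hz)) (meas_NQ _ _ _) (meas_NQ _ _ _) ?_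
  intro z hz
  have hz' := mem_D.mp hz
  have e : deriv (fun z => g z * f z) z = deriv g z * f z + g z * deriv f z :=
    ((hg.diffAt hz').hasDerivAt.mul (hf.diffAt hz').hasDerivAt).deriv
  have hw := hw z hz
  set D := deriv (fun z => g z * f z) z
  have h1 : ‖deriv g z‖ * ‖f z‖ ≤ ‖D‖ + C * ‖deriv f z‖ := by
    rw [← norm_mul, show deriv g z * f z = D - g z * deriv f z by rw [e]; ring]
    refine (norm_sub_le _ _).trans ?_
    rw [norm_mul]
    have := hC z hz
    gcongr
  have h2 : (‖deriv g z‖ * ‖f z‖) ^ 2 ≤ 2 * ‖D‖ ^ 2 + 2 * (C * ‖deriv f z‖) ^ 2 :=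
    le_trans (by gcongr) (sq_add_le _ _)
  have h3 : ‖f a‖ ≤ ‖f z - f a‖ + ‖f z‖ := by
    rw [norm_sub_rev]
    calc ‖f a‖ = ‖(f a - f z) + f z‖ := by ring_nf
      _ ≤ _ := norm_add_le _ _
  have h4 : ‖f a‖ ^ 2 ≤ 2 * ‖f z - f a‖ ^ 2 + 2 * ‖f z‖ ^ 2 := le_trans (by gcongr) (sq_add_le _ _)
  have h5 : ‖deriv g z‖ ^ 2 * ‖f a‖ ^ 2 ≤ 2 * (‖deriv g z‖ ^ 2 * ‖f z - f a‖ ^ 2) + 4 * ‖D‖ ^ 2 +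
      4 * C ^ 2 * ‖deriv f z‖ ^ 2 := by
    nlinarith [mul_le_mul_of_nonneg_left h4 (sq_nonneg ‖deriv g z‖)]
  nlinarith [mul_le_mul_of_nonneg_right h5 hw]

lemma prodU {s : ℝ} {g f : ℂ → ℂ} (hg : HolOn g) (hf : HolOn f) {C : ℝ}
    (hC : ∀ z ∈ ball (0:ℂ) 1, ‖g z‖ ≤ C) {a : ℂ} (ha : ‖a‖ < 1) :
    NQ s (fun z => g z * f z) a ≤ ENNReal.ofReal 4 * TQ s g f a +
      ENNReal.ofReal (4 * ‖f a‖ ^ 2) * NQ s g a + ENNReal.ofReal (2 * C ^ 2) * NQ s f a := by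
  have hw : ∀ z ∈ ball (0:ℂ) 1, 0 ≤ (1 - ‖phi a z‖ ^ 2) ^ s := by
    intro z hz
    have := one_sub_phi_pos ha (mem_D.mp hz)
    positivity
  have key : ENNReal.ofReal 1 * NQ s (fun z => g z * f z) a ≤ ENNReal.ofReal 4 * TQ s g f a +
      ENNReal.ofReal (4 * ‖f a‖ ^ 2) * NQ s g a + ENNReal.ofReal (2 * C ^ 2) * NQ s f a := by
    unfold NQ TQ
    refine three_int measurableSet_ball (by norm_num) (by positivity) (by positivity) (by norm_num)
      (fun z hz => mul_nonneg (by positivity) (hw z hz)) (fun z hz => mul_nonneg (by positivity) (hw z hz))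
      (fun z hz => mul_nonneg (by positivity) (hw z hz)) (meas_NQ _ _ _) (meas_NQ _ _ _) ?_
    intro z hz
    have hz' := mem_D.mp hz
    have e : deriv (fun z => g z * f z) z = deriv g z * f z + g z * deriv f z :=
      ((hg.diffAt hz').hasDerivAt.mul (hf.diffAt hz').hasDerivAt).deriv
    have hw := hw z hz
    set D := deriv (fun z => g z * f z) z
    have h1 : ‖D‖ ≤ ‖deriv g z‖ * ‖f z‖ + C * ‖deriv f z‖ := by
      rw [e]
      refine (norm_add_le _ _).trans ?_
      rw [norm_mul, norm_mul]
      have := hC z hz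
      gcongr
    have h2 : ‖D‖ ^ 2 ≤ 2 * (‖deriv g z‖ * ‖f z‖) ^ 2 + 2 * (C * ‖deriv f z‖) ^ 2 :=
      le_trans (by gcongr) (sq_add_le _ _)
    have h3 : ‖f z‖ ≤ ‖f z - f a‖ + ‖f a‖ := by
      calc ‖f z‖ = ‖(f z - f a) + f a‖ := by ring_nf
        _ ≤ _ := norm_add_le _ _
    have h4 : ‖f z‖ ^ 2 ≤ 2 * ‖f z - f a‖ ^ 2 + 2 * ‖f a‖ ^ 2 := le_trans (by gcongr) (sq_add_le _ _)
    have h5 : ‖D‖ ^ 2 ≤ 4 * (‖deriv g z‖ ^ 2 * ‖f z - f a‖ ^ 2) + 4 * ‖f a‖ ^ 2 * ‖deriv g z‖ ^ 2 +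
        2 * C ^ 2 * ‖deriv f z‖ ^ 2 := by
      nlinarith [mul_le_mul_of_nonneg_left h4 (sq_nonneg ‖deriv g z‖)]
    nlinarith [mul_le_mul_of_nonneg_right h5 hw]
  simpa using key

lemma part_one (p p' s : ℝ) (hp1 : 1 < p) (hp2 : p ≤ 2) (hpp' : 1 / p + 1 / p' = 1)
    (hs0 : 0 < s) (g : ℂ → ℂ) (hg : HolOn g)
    (hM : MapsInto (Mg g) (Besov p) (Qs s)) : g ∈ QsLog s (1 / p') ∩ Hinf := by
  have hinf := test_phi hp1 hp2 hg hM
  refine ⟨⟨hg, ?_⟩, hinf⟩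
  obtain ⟨-, C, hC⟩ := hinf
  have hone : (fun _ => 1 : ℂ → ℂ) ∈ Besov p := by
    refine ⟨differentiableOn_const _, ?_⟩
    simp [Real.zero_rpow (by linarith : p ≠ 0)]
  have hgQ := (hM _ hone).2
  rw [show Mg g (fun _ => 1) = g by ext z; simp [Mg]] at hgQ
  set M := ⨆ a ∈ ball (0:ℂ) 1, ∫⁻ z in ball (0:ℂ) 1,
      ENNReal.ofReal (‖deriv g z‖ ^ 2 * (1 - ‖phi a z‖ ^ 2) ^ s) ∂dA with hMd
  have hMv : ∀ v : ℂ, ‖v‖ < 1 →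
      ∫⁻ z in ball (0:ℂ) 1, ENNReal.ofReal (‖deriv g z‖ ^ 2 * (1 - ‖phi v z‖ ^ 2) ^ s) ∂dA ≤ M :=
    fun v hv => le_iSup₂_of_le v (mem_D.mpr hv) le_rfl
  obtain ⟨C1, hC1, h1⟩ := ubp hp1 hg hM (f := LF p) (fun b hb => LF_hol p hb) (LF_loc hp1)
    ENNReal.ofReal_ne_top (fun b hb => LF_bes hp1 hb)
  obtain ⟨K, hK, h2⟩ := besov_dir hp1 hp2 _ (ENNReal.ofReal_ne_top (r := 6 ^ p / (p - 1) * 6))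
  have hct : ENNReal.ofReal (4 ^ s * 4 / s ^ 2) / Wt s ≠ ⊤ := ENNReal.div_ne_top (by finiteness) (Wt_pos s)
  refine lt_of_le_of_lt (b := ENNReal.ofReal 2 * ((ENNReal.ofReal (4 ^ s * 4 / s ^ 2) / Wt s) * (M * K)) +
    ENNReal.ofReal 4 * C1 + ENNReal.ofReal (4 * C ^ 2) * K) ?_ ?_
  · refine iSup₂_le ?_
    intro a ha
    have ha := mem_D.mp ha
    have hL := lam_pos ha
    have hdir := h2 (LF p a) (LF_hol p ha) ((bes_conv hp2 _).trans (LF_bes hp1 ha))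
    have h3 := prodL hg (LF_hol p ha) hC ha (s := s)
    have h4 : Real.log (2 / (1 - ‖a‖)) ^ (2 * (1 / p')) ≤ ‖LF p a a‖ ^ 2 := by
      have h5 := LF_self (p := p) ha
      rw [show 2 * (1 / p') = (1 - 1 / p) * (2:ℕ) by push_cast; linarith, Real.rpow_mul hL.le,
        Real.rpow_natCast]
      gcongr
    refine (mul_le_mul_left (ENNReal.ofReal_le_ofReal h4) _).trans (h3.trans ?_)
    have h6 : TQ s g (LF p a) a ≤ (ENNReal.ofReal (4 ^ s * 4 / s ^ 2) / Wt s) * (M * K) := by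
      refine (trick_T hs0 (LF_hol p ha) (ne_top_of_le_ne_top hK hdir) hMv ha).trans ?_
      gcongr
    have h7 : NQ s (LF p a) a ≤ K := (Q_le_dir ha hs0).trans hdir
    have h8 := h1 a a ha ha
    gcongr
  · have := hgQ.ne
    exact Ne.lt_top (by finiteness)

lemma part_two (p s α : ℝ) (hp1 : 1 < p) (hp2 : p ≤ 2) (hs0 : 0 < s) (g : ℂ → ℂ)
    (hα : 1 / 2 < α) (h : g ∈ QsLog s α ∩ Hinf) : MapsInto (Mg g) (Besov p) (Qs s) := by
  obtain ⟨⟨hg, hQ⟩, -, C, hC⟩ := h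
  intro f hfB
  obtain ⟨hf, hB⟩ := hfB
  refine ⟨DifferentiableOn.mul hg hf, ?_⟩
  set M := ⨆ a ∈ ball (0:ℂ) 1,
      (ENNReal.ofReal ((Real.log (2 / (1 - ‖a‖))) ^ (2 * α)) *
        ∫⁻ z in ball (0:ℂ) 1,
          ENNReal.ofReal (‖deriv g z‖ ^ 2 * (1 - ‖phi a z‖ ^ 2) ^ s) ∂dA) with hMd
  have hMv : ∀ v : ℂ, ‖v‖ < 1 → ENNReal.ofReal ((Real.log (2 / (1 - ‖v‖))) ^ (2 * α)) * NQ s g v ≤ M :=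
    fun v hv => le_iSup₂_of_le v (mem_D.mpr hv) le_rfl
  obtain ⟨K, hK, h2⟩ := besov_dir hp1 hp2 _ hB.ne
  have hdir := h2 f hf (bes_conv hp2 _)
  have hl2 := log2_pos
  -- comparison of powers of the logarithm
  have hpow : ∀ (v : ℂ), ‖v‖ < 1 → ∀ β : ℝ, β ≤ 2 * α → Real.log (2 / (1 - ‖v‖)) ^ β ≤
      Real.log 2 ^ (β - 2 * α) * Real.log (2 / (1 - ‖v‖)) ^ (2 * α) := by
    intro v hv β hβ
    have hL := lam_pos hv
    have e : Real.log (2 / (1 - ‖v‖)) ^ β =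
        Real.log (2 / (1 - ‖v‖)) ^ (β - 2 * α) * Real.log (2 / (1 - ‖v‖)) ^ (2 * α) := by
      rw [← Real.rpow_add hL]; congr 1; ring
    rw [e]
    have := Real.rpow_le_rpow_of_nonpos hl2 (lam_ge hv) (by linarith : β - 2 * α ≤ 0)
    gcongr
  have hNb : ∀ (v : ℂ), ‖v‖ < 1 → ∀ β : ℝ, β ≤ 2 * α →
      ENNReal.ofReal (Real.log (2 / (1 - ‖v‖)) ^ β) * NQ s g v ≤
        ENNReal.ofReal (Real.log 2 ^ (β - 2 * α)) * M := by
    intro v hv β hβ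
    have h3 := ENNReal.ofReal_le_ofReal (hpow v hv β hβ)
    rw [ENNReal.ofReal_mul (by positivity)] at h3
    refine (mul_le_mul_left h3 _).trans ?_
    rw [mul_assoc]
    exact mul_le_mul_right (hMv v hv) _
  set M0 := ENNReal.ofReal (Real.log 2 ^ (0 - 2 * α)) * M with hM0
  set M1 := ENNReal.ofReal (Real.log 2 ^ (1 - 2 * α)) * M with hM1
  have hMt : M ≠ ⊤ := hQ.ne
  have hM0t : M0 ≠ ⊤ := by rw [hM0]; finiteness
  have hM1t : M1 ≠ ⊤ := by rw [hM1]; finiteness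
  have hb0 : ∀ v : ℂ, ‖v‖ < 1 → NQ s g v ≤ M0 := by
    intro v hv
    have := hNb v hv 0 (by linarith)
    rw [Real.rpow_zero, ENNReal.ofReal_one, one_mul] at this
    exact this
  have hb1 : ∀ v : ℂ, ‖v‖ < 1 → ENNReal.ofReal (Real.log (2 / (1 - ‖v‖))) * NQ s g v ≤ M1 := by
    intro v hv
    have := hNb v hv 1 (by linarith)
    rw [Real.rpow_one] at this
    exact this
  have hct : ENNReal.ofReal (4 ^ s * 4 / s ^ 2) / Wt s ≠ ⊤ := ENNReal.div_ne_top (by finiteness) (Wt_pos s)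
  refine lt_of_le_of_lt (b := ENNReal.ofReal 4 * ((ENNReal.ofReal (4 ^ s * 4 / s ^ 2) / Wt s) * (M0 * K)) +
    (ENNReal.ofReal (8 * ‖f 0‖ ^ 2) * M0 + ENNReal.ofReal (8 * 216) * K * M1) +
      ENNReal.ofReal (2 * C ^ 2) * K) ?_ (Ne.lt_top (by finiteness))
  refine iSup₂_le ?_
  intro a ha
  have ha := mem_D.mp ha
  refine (prodU hg hf hC ha (s := s)).trans ?_
  have h6 : TQ s g f a ≤ (ENNReal.ofReal (4 ^ s * 4 / s ^ 2) / Wt s) * (M0 * K) := by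
    refine (trick_T hs0 hf (ne_top_of_le_ne_top hK hdir) hb0 ha).trans ?_
    gcongr
  have h7 : NQ s f a ≤ K := (Q_le_dir ha hs0).trans hdir
  have h8 : ENNReal.ofReal (4 * ‖f a‖ ^ 2) * NQ s g a ≤
      ENNReal.ofReal (8 * ‖f 0‖ ^ 2) * M0 + ENNReal.ofReal (8 * 216) * K * M1 := by
    have h9 : ‖f a‖ ^ 2 ≤ 2 * ‖f a - f 0‖ ^ 2 + 2 * ‖f 0‖ ^ 2 := by
      refine le_trans ?_ (sq_add_le _ _)
      gcongr
      calc ‖f a‖ = ‖(f a - f 0) + f 0‖ := by ring_nf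
        _ ≤ _ := norm_add_le _ _
    have h10 : ENNReal.ofReal (4 * ‖f a‖ ^ 2) ≤ ENNReal.ofReal (8 * ‖f 0‖ ^ 2) +
        ENNReal.ofReal 8 * ENNReal.ofReal (‖f a - f 0‖ ^ 2) := by
      rw [← ENNReal.ofReal_mul (by norm_num), ← ENNReal.ofReal_add (by positivity) (by positivity)]
      apply ENNReal.ofReal_le_ofReal
      linarith
    refine (mul_le_mul_left h10 _).trans ?_
    rw [add_mul]
    refine add_le_add (mul_le_mul_right (hb0 a ha) _) ?_
    have h11 := (log_growth hf ha).trans (mul_le_mul_right hdir _)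
    calc _ ≤ ENNReal.ofReal 8 * (ENNReal.ofReal (216 * Real.log (2 / (1 - ‖a‖))) * K) * NQ s g a := by gcongr
      _ = ENNReal.ofReal (8 * 216) * K * (ENNReal.ofReal (Real.log (2 / (1 - ‖a‖))) * NQ s g a) := by
        rw [ENNReal.ofReal_mul (by norm_num : (0:ℝ) ≤ 216), ENNReal.ofReal_mul (by norm_num : (0:ℝ) ≤ 8)]
        ring
      _ ≤ _ := mul_le_mul_right (hb1 a ha) _
  gcongr

/-- For `1 < p ≤ 2`, `0 < s ≤ 1`, `p'` the conjugate exponent of `p`, and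
`g` holomorphic on the unit disc: (i) if `M_g` maps `Bᵖ` into `Q_s`, then
`g ∈ Q_{s,log,1/p'} ∩ H^∞`; (ii) if `g ∈ Q_{s,log,α} ∩ H^∞` for some `α > 1/2`, then
`M_g` maps `Bᵖ` into `Q_s`. -/
theorem stmt11 (p p' s : ℝ) (hp1 : 1 < p) (hp2 : p ≤ 2) (hpp' : 1 / p + 1 / p' = 1)
    (hs0 : 0 < s) (hs1 : s ≤ 1) (g : ℂ → ℂ) (hg : HolOn g) :
    (MapsInto (Mg g) (Besov p) (Qs s) → g ∈ QsLog s (1 / p') ∩ Hinf) ∧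
    ((∃ α : ℝ, 1 / 2 < α ∧ g ∈ QsLog s α ∩ Hinf) → MapsInto (Mg g) (Besov p) (Qs s)) := by
  refine ⟨part_one p p' s hp1 hp2 hpp' hs0 g hg, ?_⟩
  rintro ⟨α, hα, h⟩
  exact part_two p s α hp1 hp2 hs0 g hα h
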